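/- Let n and n^l both lie in ℤ₊^{m₁+1}(•) × ℤ₊^{m₂+1}(•) with n_{1,m₁} ≥ 2. Then for every j ∈ {−m₂,…,m₁}, the zeros of A_{n,j} and A_{n^l,j} interlace: all these zeros are real and simple, and strictly between any two consecutive zeros of A_{n,j} there is a zero of A_{n^l,j}, and strictly between any two consecutive zeros of A_{n^l,j} there is a zero of A_{n,j}. (For 0 ≤ j ≤ m₁ the zeros in question are those in ℂ∖Δ¹_{j+1}, which lie in the interior of Δ¹_j; for −m₂ ≤ j ≤ −1 they are the zeros of A_{n,j} in ℂ∖Δ²_{−j−1}, which lie in the interior of Δ²_{−j}.) -/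

import Mathlib

open MeasureTheory Polynomial Set Filter

noncomputable section

/-- The support of a Borel measure on `ℝ`: points all of whose open neighborhoods
have positive measure. -/
def msupport (μ : Measure ℝ) : Set ℝ :=
  {x : ℝ | ∀ U : Set ℝ, IsOpen U → x ∈ U → μ U ≠ 0}

/-- The copy of a real set inside `ℂ`. -/
def cpx (s : Set ℝ) : Set ℂ := (fun x : ℝ => (x : ℂ)) '' s

/-- `nikhat μ e j g` is the Cauchy transform of the measure `⟨σ_j, …, σ_{j+g}⟩`,
where `σ_i = (e i) • (μ i)` is a measure of constant sign. -/
def nikhat (μ : ℕ → Measure ℝ) (e : ℕ → ℝ) : ℕ → ℕ → ℂ → ℂ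
  | j, 0, z => (e j : ℂ) * ∫ t, 1 / (z - (t : ℂ)) ∂(μ j)
  | j, g + 1, z => (e j : ℂ) * ∫ t, nikhat μ e (j + 1) g (t : ℂ) / (z - (t : ℂ)) ∂(μ j)

/-- The Cauchy transform `ŝ_{j+1,k}` of `s_{j+1,k} = ⟨σ_{j+1},…,σ_k⟩`, with the
convention that it is `≡ 1` when `k ≤ j`. -/
def wt (μ : ℕ → Measure ℝ) (e : ℕ → ℝ) (j k : ℕ) (z : ℂ) : ℂ :=
  if j < k then nikhat μ e (j + 1) (k - (j + 1)) z else 1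

/-- Integral of `f` against the measure `s_{j,k} = ⟨σ_j, …, σ_k⟩`
(whose density with respect to `σ_j` is `ŝ_{j+1,k}`). -/
def sInt (μ : ℕ → Measure ℝ) (e : ℕ → ℝ) (j k : ℕ) (f : ℝ → ℂ) : ℂ :=
  (e j : ℂ) * ∫ x, f x * wt μ e j k (x : ℂ) ∂(μ j)

/-- The linear form `𝒜_{n,j}(z) = ∑_{k=j}^{m₁} a_k(z) ŝ¹_{j+1,k}(z)`. -/
def linForm (μ : ℕ → Measure ℝ) (e : ℕ → ℝ) (m₁ j : ℕ) (A : ℕ → Polynomial ℝ)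
    (z : ℂ) : ℂ :=
  ∑ k ∈ Finset.Icc j m₁, Polynomial.aeval z (A k) * wt μ e j k z

/-- The linear forms with negative index:
`𝒜_{n,-j-1}(z) = ∫ 𝒜_{n,-j}(x) dσ²_j(x) / (z - x)`. -/
def linFormNeg (μ : ℕ → Measure ℝ) (e : ℕ → ℝ) (F : ℂ → ℂ) : ℕ → ℂ → ℂ
  | 0 => F
  | j + 1 => fun z => (e j : ℂ) * ∫ x, linFormNeg μ e F j (x : ℂ) / (z - (x : ℂ)) ∂(μ j)

/-- A Nikishin system `N(σ_0,…,σ_m)` of measures of constant sign `σ_j = (e j) • (μ j)`,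
with `Co(supp σ_j) = Δ_j = [a j, b j]` and `Δ_j ∩ Δ_{j+1} = ∅`. -/
structure NikSys (m : ℕ) where
  μ : ℕ → Measure ℝ
  e : ℕ → ℝ
  a : ℕ → ℝ
  b : ℕ → ℝ
  fin : ∀ j, IsFiniteMeasure (μ j)
  sgn : ∀ j, e j = 1 ∨ e j = -1
  hull : ∀ j ≤ m, convexHull ℝ (msupport (μ j)) = Set.Icc (a j) (b j)
  inf : ∀ j ≤ m, (msupport (μ j)).Infinite
  disj : ∀ j < m, Set.Icc (a j) (b j) ∩ Set.Icc (a (j + 1)) (b (j + 1)) = ∅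

/-- Decreasing multi-index (the class `ℤ₊^{m+1}(•)`). -/
def Decr (m : ℕ) (n : ℕ → ℕ) : Prop := ∀ j < m, n (j + 1) ≤ n j

/-- `|n| = n_0 + ⋯ + n_m`. -/
def msum (m : ℕ) (n : ℕ → ℕ) : ℕ := ∑ j ∈ Finset.range (m + 1), n j

/-- `N_{1,j} = n_j + ⋯ + n_m` (partial tail sums). -/
def tailSum (m : ℕ) (n : ℕ → ℕ) (j : ℕ) : ℕ := ∑ k ∈ Finset.Icc j m, n k

/-- Mixed type multiple orthogonal polynomials relative to `(n1;n2)` and `(S1,S2)`. -/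
def IsMOP (m₁ m₂ : ℕ) (S1 : NikSys m₁) (S2 : NikSys m₂)
    (n1 n2 : ℕ → ℕ) (A : ℕ → Polynomial ℝ) : Prop :=
  (∀ j ≤ m₁, (A j).degree < (n1 j : WithBot ℕ)) ∧
  (∃ j ≤ m₁, A j ≠ 0) ∧
  ∀ k ≤ m₂, ∀ ν < n2 k,
    sInt S2.μ S2.e 0 k (fun x => (x : ℂ) ^ ν * linForm S1.μ S1.e m₁ 0 A (x : ℂ)) = 0

/-- The "monic" normalization: the last entry different from zero has leading
coefficient `1`. -/
def MonicLast (m₁ : ℕ) (A : ℕ → Polynomial ℝ) : Prop :=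
  ∃ j ≤ m₁, (A j).Monic ∧ ∀ k, j < k → k ≤ m₁ → A k = 0

/-- `n^l`: increase the `l`-th component by one. -/
def bump (l : ℕ) (n : ℕ → ℕ) : ℕ → ℕ := fun j => if j = l then n j + 1 else n j


/-- Between any two consecutive real zeros of `f` in the region `D` there is a real
zero of `g`. -/
def InterlaceOn (f g : ℂ → ℂ) (D : Set ℂ) : Prop :=
  ∀ x₁ x₂ : ℝ, x₁ < x₂ → (x₁ : ℂ) ∈ D → (x₂ : ℂ) ∈ D →
    f x₁ = 0 → f x₂ = 0 →
    (∀ y : ℝ, x₁ < y → y < x₂ → (y : ℂ) ∈ D → f y ≠ 0) →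
    ∃ y : ℝ, x₁ < y ∧ y < x₂ ∧ g y = 0

/-!
The forms of consecutive indices are related by
`𝒜_{n,j} = (polynomial) + ∫ 𝒜_{n,j+1}(x) dσ_{j+1}(x) / (z - x)`, and each of the forms
`𝒜_{n,0}, …, 𝒜_{n,-m₂}` is orthogonal to polynomials of small degree. If `W` divides a form, then
the next form divided by `W` is orthogonal to all polynomials of degree smaller than a number
governed by `deg W`, so it has at least that many sign changes: zeros are passed along the whole
chain. A form with a zero that does not come from a sign change (a zero outside the interval, a
nonreal pair, or a double zero) gains extra zeros, and these accumulate into more zeros than the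
polynomial coefficients allow, which forces all coefficients to vanish. This shows that the zeros
are real, simple and in the expected interval. A nontrivial real combination of the forms of `n` and
`n^l` satisfies all but one of the orthogonality conditions, so it has no double zero either. Hence
the Wronskian of the two forms does not vanish, and Rolle's theorem for their quotient gives the
interlacing.
-/

/-! ## Cauchy transforms of compactly carried measures -/

theorem ofReal_mem_cpx {s : Set ℝ} {x : ℝ} : (x : ℂ) ∈ cpx s ↔ x ∈ s :=
  Complex.ofReal_injective.mem_set_image

theorem conj_mem_cpx {s : Set ℝ} {z : ℂ} : starRingEnd ℂ z ∈ cpx s ↔ z ∈ cpx s := by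
  suffices ∀ w ∈ cpx s, starRingEnd ℂ w ∈ cpx s from
    ⟨fun h => by simpa only [Complex.conj_conj] using this _ h, this z⟩
  rintro _ ⟨x, hx, rfl⟩
  exact ⟨x, hx, (Complex.conj_ofReal x).symm⟩

theorem conj_mem_compl_cpx {s : Set ℝ} {z : ℂ} (hz : z ∈ (cpx s)ᶜ) :
    starRingEnd ℂ z ∈ (cpx s)ᶜ :=
  fun h => hz (conj_mem_cpx.mp h)

theorem isOpen_compl_cpx {K : Set ℝ} (hK : IsCompact K) : IsOpen (cpx K)ᶜ :=
  (hK.image Complex.continuous_ofReal).isClosed.isOpen_compl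

theorem sub_ofReal_ne_zero {K : Set ℝ} {z : ℂ} (hz : z ∈ (cpx K)ᶜ) {x : ℝ} (hx : x ∈ K) :
    z - x ≠ 0 :=
  fun h => hz ⟨x, hx, (sub_eq_zero.mp h).symm⟩

/-- The Cauchy transform `z ↦ ∫ f(x) dμ(x) / (z - x)` of the complex measure `f dμ`. -/
def cauchyTransform (μ : Measure ℝ) (f : ℝ → ℂ) (z : ℂ) : ℂ :=
  ∫ x, f x / (z - x) ∂μ

/-- `μ` is a finite measure carried by the compact set `K` of the real line, so that every function
continuous on `K` is `μ`-integrable. -/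
structure IsCarriedBy (μ : Measure ℝ) (K : Set ℝ) : Prop where
  isFiniteMeasure : IsFiniteMeasure μ
  isCompact : IsCompact K
  ae_mem : ∀ᵐ x ∂μ, x ∈ K

namespace IsCarriedBy

variable {μ ν : Measure ℝ} {K L : Set ℝ} {f g : ℝ → ℂ}

theorem restrict_eq (h : IsCarriedBy μ K) : μ.restrict K = μ :=
  Measure.restrict_eq_self_of_ae_mem h.ae_mem

theorem integrable {E : Type*} [NormedAddCommGroup E] {f : ℝ → E} (h : IsCarriedBy μ K)
    (hf : ContinuousOn f K) : Integrable f μ := by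
  have := h.isFiniteMeasure
  rw [← h.restrict_eq]
  exact hf.integrableOn_compact h.isCompact

theorem integral_congr (h : IsCarriedBy μ K) (hfg : EqOn f g K) : ∫ x, f x ∂μ = ∫ x, g x ∂μ :=
  integral_congr_ae (h.ae_mem.mono fun _ hx => hfg hx)

theorem continuousOn_div_sub (hf : ContinuousOn f K) {z : ℂ} (hz : z ∈ (cpx K)ᶜ) :
    ContinuousOn (fun x : ℝ => f x / (z - x)) K :=
  hf.div (by fun_prop) fun _ hx => sub_ofReal_ne_zero hz hx

theorem cauchyTransform_smul_add_smul (h : IsCarriedBy μ K) (hf : ContinuousOn f K)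
    (hg : ContinuousOn g K) (α β : ℂ) {z : ℂ} (hz : z ∈ (cpx K)ᶜ) :
    cauchyTransform μ (fun x => α * f x + β * g x) z =
      α * cauchyTransform μ f z + β * cauchyTransform μ g z := by
  simp only [cauchyTransform, add_div, mul_div_assoc]
  rw [integral_add ((h.integrable (continuousOn_div_sub hf hz)).const_mul α)
    ((h.integrable (continuousOn_div_sub hg hz)).const_mul β), integral_const_mul,
    integral_const_mul]

theorem hasDerivAt_cauchyTransform (h : IsCarriedBy μ K) (hf : ContinuousOn f K) {z₀ : ℂ}
    (hz₀ : z₀ ∈ (cpx K)ᶜ) :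
    HasDerivAt (cauchyTransform μ f) (∫ x, -f x / (z₀ - x) ^ 2 ∂μ) z₀ := by
  obtain ⟨ε, hε, hball⟩ := Metric.isOpen_iff.mp (isOpen_compl_cpx h.isCompact) z₀ hz₀
  have hsub : Metric.ball z₀ (ε / 2) ⊆ (cpx K)ᶜ :=
    (Metric.ball_subset_ball (by linarith)).trans hball
  have hnear : Metric.ball z₀ (ε / 2) ∈ nhds z₀ := Metric.ball_mem_nhds z₀ (by linarith)
  have dist_lower {z : ℂ} (hz : z ∈ Metric.ball z₀ (ε / 2)) {x : ℝ} (hx : x ∈ K) :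
      ε / 2 ≤ ‖z - x‖ := by
    have hfar : ε ≤ dist (x : ℂ) z₀ :=
      not_lt.mp fun hlt => hball (Metric.mem_ball.mpr hlt) (ofReal_mem_cpx.mpr hx)
    rw [← dist_eq_norm]
    linarith [dist_triangle_left (x : ℂ) z₀ z, Metric.mem_ball.mp hz]
  refine (hasDerivAt_integral_of_dominated_loc_of_deriv_le (μ := μ) (𝕜 := ℂ)
    (F := fun z x => f x / (z - (x : ℂ))) (F' := fun z x => -f x / (z - (x : ℂ)) ^ 2)
    (bound := fun x => ‖f x‖ / (ε / 2) ^ 2) hnear ?_ ?_ ?_ ?_ ?_ ?_).2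
  · filter_upwards [hnear] with z hz
    exact (h.integrable (continuousOn_div_sub hf (hsub hz))).aestronglyMeasurable
  · exact h.integrable (continuousOn_div_sub hf hz₀)
  · exact (h.integrable (hf.neg.div (by fun_prop) fun _ hx =>
      pow_ne_zero _ (sub_ofReal_ne_zero hz₀ hx))).aestronglyMeasurable
  · filter_upwards [h.ae_mem] with x hx z hz
    rw [norm_div, norm_neg, norm_pow]
    gcongr
    exact dist_lower hz hx
  · exact (h.integrable hf).norm.div_const _
  · filter_upwards [h.ae_mem] with x hx z hz
    simpa only [zero_mul, mul_one, zero_sub] using (hasDerivAt_const z (f x)).fun_div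
      ((hasDerivAt_id' z).sub_const (x : ℂ)) (sub_ofReal_ne_zero (hsub hz) hx)

theorem differentiableOn_cauchyTransform (h : IsCarriedBy μ K) (hf : ContinuousOn f K) :
    DifferentiableOn ℂ (cauchyTransform μ f) (cpx K)ᶜ := fun _ hz =>
  (h.hasDerivAt_cauchyTransform hf hz).differentiableAt.differentiableWithinAt

theorem integral_mul_cauchyTransform_comm (hμ : IsCarriedBy μ K) (hν : IsCarriedBy ν L)
    (hKL : Disjoint K L) (hf : ContinuousOn f K) (hg : ContinuousOn g L) :
    ∫ x, g x * cauchyTransform μ f x ∂ν = -∫ t, f t * cauchyTransform ν g t ∂μ := by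
  have := hμ.isFiniteMeasure
  have := hν.isFiniteMeasure
  have hint : Integrable (fun p : ℝ × ℝ => g p.1 * (f p.2 / ((p.1 : ℂ) - (p.2 : ℂ))))
      (ν.prod μ) := by
    conv => arg 2; rw [← hμ.restrict_eq, ← hν.restrict_eq]
    rw [Measure.prod_restrict]
    refine ContinuousOn.integrableOn_compact (hν.isCompact.prod hμ.isCompact) ?_
    refine (hg.comp continuous_fst.continuousOn fun _ hp => hp.1).mul
      ((hf.comp continuous_snd.continuousOn fun _ hp => hp.2).div (by fun_prop) ?_)
    rintro ⟨x, t⟩ ⟨hx, ht⟩ heq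
    exact hKL.ne_of_mem ht hx (Complex.ofReal_injective (sub_eq_zero.mp heq)).symm
  simp_rw [cauchyTransform, ← integral_const_mul]
  rw [integral_integral_swap hint, ← integral_neg]
  refine integral_congr_ae (.of_forall fun t => ?_)
  simp only [← integral_neg]
  refine integral_congr_ae (.of_forall fun x => ?_)
  simp only
  rw [← neg_sub (x : ℂ) (t : ℂ), div_neg]
  ring

end IsCarriedBy

/-! ## Polynomials against Cauchy transforms -/

section DividedDifferences

variable {R : Type*} [CommRing R]

theorem coeff_iterate_divX (p : R[X]) (k i : ℕ) : (divX^[k] p).coeff i = p.coeff (i + k) := by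
  induction k generalizing i with
  | zero => rfl
  | succ k ih => rw [Function.iterate_succ_apply', coeff_divX, ih, add_right_comm, add_assoc]

theorem iterate_divX_eq_zero {p : R[X]} {k : ℕ} (hk : p.natDegree < k) : divX^[k] p = 0 := by
  ext i
  rw [coeff_iterate_divX, coeff_zero, coeff_eq_zero_of_natDegree_lt (by lia)]

theorem natDegree_iterate_divX (p : R[X]) (k : ℕ) :
    (divX^[k] p).natDegree = p.natDegree - k := by
  induction k with
  | zero => rfl
  | succ k ih =>
    rw [Function.iterate_succ_apply', natDegree_divX_eq_natDegree_tsub_one, ih, Nat.sub_sub]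

theorem eval_sub_eval_eq_sum_iterate_divX {p : R[X]} {n : ℕ} (hn : p.natDegree ≤ n) (z x : R) :
    p.eval z - p.eval x =
      (z - x) * ∑ i ∈ Finset.range n, z ^ i * (divX^[i + 1] p).eval x := by
  induction n generalizing p with
  | zero =>
    rw [eq_C_of_natDegree_le_zero hn, eval_C, eval_C, sub_self, Finset.sum_range_zero, mul_zero]
  | succ n ih =>
    have hdiv : p.divX.natDegree ≤ n := by
      rw [natDegree_divX_eq_natDegree_tsub_one]
      lia
    have heval (y : R) : p.eval y = p.divX.eval y * y + p.coeff 0 := by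
      conv_lhs => rw [← divX_mul_X_add p, eval_add, eval_mul, eval_X, eval_C]
    have hsum : ∑ i ∈ Finset.range n, z ^ (i + 1) * (divX^[i + 1 + 1] p).eval x =
        z * ∑ i ∈ Finset.range n, z ^ i * (divX^[i + 1] p.divX).eval x := by
      rw [Finset.mul_sum]
      refine Finset.sum_congr rfl fun i _ => ?_
      rw [pow_succ', mul_assoc, Function.iterate_succ_apply divX (i + 1)]
    rw [Finset.sum_range_succ', hsum, zero_add, Function.iterate_one, pow_zero, heval z, heval x]
    linear_combination z * ih hdiv

end DividedDifferences

/-- The polynomial part of `p · C[φ dμ]`, where `C` is the Cauchy transform: this is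
`∫ (p(z) - p(x)) / (z - x) φ(x) dμ(x)`, expanded in powers of `z`. -/
def cauchyQuotient (μ : Measure ℝ) (φ : ℝ → ℂ) (p : ℂ[X]) : ℂ[X] :=
  ∑ i ∈ Finset.range p.natDegree, C (∫ x, (divX^[i + 1] p).eval (x : ℂ) * φ x ∂μ) * X ^ i

theorem coeff_cauchyQuotient (μ : Measure ℝ) (φ : ℝ → ℂ) (p : ℂ[X]) (i : ℕ) :
    (cauchyQuotient μ φ p).coeff i = ∫ x, (divX^[i + 1] p).eval (x : ℂ) * φ x ∂μ := by
  simp only [cauchyQuotient, finsetSum_coeff, coeff_C_mul_X_pow]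
  rw [Finset.sum_ite_eq]
  split_ifs with hi
  · rfl
  · rw [iterate_divX_eq_zero (by simpa [Nat.lt_succ_iff] using hi)]
    simp only [eval_zero, zero_mul, integral_zero]

theorem degree_cauchyQuotient_lt (μ : Measure ℝ) (φ : ℝ → ℂ) {p : ℂ[X]} {n : ℕ}
    (hp : p.natDegree ≤ n) : (cauchyQuotient μ φ p).degree < n := by
  rw [degree_lt_iff_coeff_zero]
  intro i hi
  rw [coeff_cauchyQuotient, iterate_divX_eq_zero (by lia)]
  simp only [eval_zero, zero_mul, integral_zero]

/-- `f dμ` is orthogonal to all polynomials of degree less than `N`. -/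
def OrthLT (μ : Measure ℝ) (f : ℝ → ℂ) (N : ℕ) : Prop :=
  ∀ q : ℂ[X], q.degree < N → ∫ x, q.eval (x : ℂ) * f x ∂μ = 0

namespace IsCarriedBy

variable {μ : Measure ℝ} {K : Set ℝ} {f : ℝ → ℂ}

theorem integrable_eval_mul (h : IsCarriedBy μ K) (hf : ContinuousOn f K) (q : ℂ[X]) :
    Integrable (fun x : ℝ => q.eval (x : ℂ) * f x) μ :=
  h.integrable (ContinuousOn.mul (by fun_prop) hf)

theorem eval_mul_cauchyTransform (h : IsCarriedBy μ K) (hf : ContinuousOn f K) (p : ℂ[X]) {z : ℂ}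
    (hz : z ∈ (cpx K)ᶜ) :
    p.eval z * cauchyTransform μ f z =
      (cauchyQuotient μ f p).eval z + cauchyTransform μ (fun x => p.eval (x : ℂ) * f x) z := by
  have hquot : (cauchyQuotient μ f p).eval z =
      ∫ x, ∑ i ∈ Finset.range p.natDegree, z ^ i * ((divX^[i + 1] p).eval (x : ℂ) * f x) ∂μ := by
    rw [integral_finsetSum _ fun i _ => (h.integrable_eval_mul hf _).const_mul _]
    simp only [cauchyQuotient, eval_finsetSum, eval_mul, eval_C, eval_pow, eval_X,
      integral_const_mul]
    exact Finset.sum_congr rfl fun i _ => mul_comm _ _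
  have hcont : ContinuousOn (fun x : ℝ => p.eval (x : ℂ) * f x) K := by fun_prop
  rw [hquot, cauchyTransform, cauchyTransform, ← integral_const_mul,
    ← integral_add (integrable_finsetSum _ fun i _ => (h.integrable_eval_mul hf _).const_mul _)
      (h.integrable (continuousOn_div_sub hcont hz))]
  refine h.integral_congr fun x hx => ?_
  have hne := sub_ofReal_ne_zero hz hx
  have hdiff := eval_sub_eval_eq_sum_iterate_divX le_rfl (p := p) z (x : ℂ)
  simp only [← mul_assoc, ← Finset.sum_mul]
  field_simp
  linear_combination f x * hdiff

theorem orthLT_of_sequence (h : IsCarriedBy μ K) (hf : ContinuousOn f K) {N : ℕ}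
    (S : Polynomial.Sequence ℂ) (hS : ∀ i < N, ∫ x, (S i).eval (x : ℂ) * f x ∂μ = 0) :
    OrthLT μ f N := by
  intro q hq
  rw [← mem_degreeLT, ← S.span_degreeLT fun i _ => (leadingCoeff_ne_zero.mpr (S.ne_zero i)).isUnit]
    at hq
  induction hq using Submodule.span_induction with
  | mem p hp =>
    obtain ⟨i, hi, rfl⟩ := hp
    exact hS i hi
  | zero => simp only [eval_zero, zero_mul, integral_zero]
  | add p q _ _ hp hq =>
    simp only [eval_add, add_mul]
    rw [integral_add (h.integrable_eval_mul hf p) (h.integrable_eval_mul hf q), hp, hq, add_zero]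
  | smul c p _ hp =>
    simp only [eval_smul, smul_eq_mul, mul_assoc]
    rw [integral_const_mul, hp, mul_zero]

theorem orthLT_of_moments (h : IsCarriedBy μ K) (hf : ContinuousOn f K) {N : ℕ}
    (hmom : ∀ ν < N, ∫ x, (x : ℂ) ^ ν * f x ∂μ = 0) : OrthLT μ f N :=
  h.orthLT_of_sequence hf ⟨fun i => X ^ i, fun i => degree_X_pow i⟩ fun i hi => by
    simpa only [eval_pow, eval_X] using hmom i hi

end IsCarriedBy

/-! ## Divisibility of holomorphic functions by polynomials -/

theorem eqOn_of_eqOn_diff_finite {f g : ℂ → ℂ} {D s : Set ℂ} (hD : IsOpen D) (hs : s.Finite)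
    (hf : ContinuousOn f D) (hg : ContinuousOn g D) (hfg : EqOn f g (D \ s)) : EqOn f g D :=
  hfg.of_subset_closure hf hg sdiff_subset
    ((hs.countable.dense_compl ℂ).open_subset_closure_inter hD)

/-- The function `F` is, on `D`, the product of the polynomial `W` and a holomorphic function. -/
def DvdOn (W : ℝ[X]) (F : ℂ → ℂ) (D : Set ℂ) : Prop :=
  ∃ H : ℂ → ℂ, DifferentiableOn ℂ H D ∧ ∀ z ∈ D, F z = aeval z W * H z

/-- All complex zeros of the nonzero polynomial `W` lie in `D`. -/
def RootsIn (W : ℝ[X]) (D : Set ℂ) : Prop :=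
  W ≠ 0 ∧ ∀ z : ℂ, aeval z W = 0 → z ∈ D

theorem aeval_ofReal (W : ℝ[X]) (x : ℝ) : aeval (x : ℂ) W = (W.eval x : ℝ) :=
  aeval_algebraMap_apply_eq_algebraMap_eval x W

theorem finite_setOf_aeval_eq_zero {W : ℝ[X]} (hW : W ≠ 0) : {z : ℂ | aeval z W = 0}.Finite :=
  (W.rootSet_finite ℂ).subset fun _ hz => mem_rootSet.mpr ⟨hW, hz⟩

theorem finite_setOf_eval_eq_zero {W : ℝ[X]} (hW : W ≠ 0) : {x : ℝ | W.eval x = 0}.Finite :=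
  (W.rootSet_finite ℝ).subset fun x hx => mem_rootSet.mpr ⟨hW, by rwa [coe_aeval_eq_eval]⟩

namespace RootsIn

variable {V W : ℝ[X]} {D D' : Set ℂ}

theorem one : RootsIn 1 D := ⟨one_ne_zero, fun _ hz => by simp at hz⟩

theorem X_sub_C {x : ℝ} (hx : (x : ℂ) ∈ D) : RootsIn (X - C x) D :=
  ⟨X_sub_C_ne_zero x, fun z hz => by
    rw [map_sub, aeval_X, aeval_C, sub_eq_zero] at hz
    exact hz ▸ hx⟩

theorem mul (hV : RootsIn V D) (hW : RootsIn W D) : RootsIn (V * W) D :=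
  ⟨mul_ne_zero hV.1 hW.1, fun z hz => by
    rw [map_mul, mul_eq_zero] at hz
    exact hz.elim (hV.2 z) (hW.2 z)⟩

theorem mono (hW : RootsIn W D) (hD : D ⊆ D') : RootsIn W D' :=
  ⟨hW.1, fun z hz => hD (hW.2 z hz)⟩

theorem eval_ne_zero {K : Set ℝ} (hW : RootsIn W (cpx K)ᶜ) {x : ℝ} (hx : x ∈ K) :
    W.eval x ≠ 0 := fun h =>
  hW.2 x (by rw [aeval_ofReal, h, Complex.ofReal_zero]) (ofReal_mem_cpx.mpr hx)

theorem aeval_ne_zero {K : Set ℝ} (hW : RootsIn W (cpx K)ᶜ) {x : ℝ} (hx : x ∈ K) :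
    aeval (x : ℂ) W ≠ 0 := by
  rw [aeval_ofReal]
  exact_mod_cast hW.eval_ne_zero hx

end RootsIn

theorem prod_X_sub_C_dvd {D : Set ℂ} (hD : IsOpen D) {H : ℂ → ℂ} (hH : ContinuousOn H D)
    (s : Multiset ℂ) (hs : ∀ a ∈ s, a ∈ D) {p : ℂ[X]}
    (hp : ∀ z ∈ D, p.eval z = ((s.map fun a => X - C a).prod).eval z * H z) :
    (s.map fun a => X - C a).prod ∣ p := by
  induction s using Multiset.induction_on generalizing p with
  | empty => simp only [Multiset.map_zero, Multiset.prod_zero, one_dvd]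
  | cons a s ih =>
    rw [Multiset.forall_mem_cons] at hs
    rw [Multiset.map_cons, Multiset.prod_cons] at hp ⊢
    obtain ⟨q, rfl⟩ : X - C a ∣ p := dvd_iff_isRoot.mpr <| by
      rw [IsRoot, hp a hs.1]
      simp
    refine mul_dvd_mul_left _ (ih hs.2 ?_)
    refine eqOn_of_eqOn_diff_finite (s := {a}) hD (finite_singleton a) (by fun_prop)
      (by fun_prop) fun z hz => ?_
    have hza : z - a ≠ 0 := sub_ne_zero.mpr hz.2
    have heq := hp z hz.1
    simp only [eval_mul, eval_sub, eval_X, eval_C] at heq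
    exact mul_left_cancel₀ hza (by rw [heq, mul_assoc])

theorem DvdOn.eq_zero_of_degree_lt {W : ℝ[X]} {D : Set ℂ} (hD : IsOpen D) (hroots : RootsIn W D)
    {p : ℂ[X]} (hdvd : DvdOn W (fun z => p.eval z) D) (hdeg : p.degree < W.natDegree) : p = 0 := by
  obtain ⟨H, hH, hp⟩ := hdvd
  set Wc := W.map (algebraMap ℝ ℂ)
  have hWc : Wc = C Wc.leadingCoeff * (Wc.roots.map fun a => X - C a).prod :=
    (IsAlgClosed.splits Wc).eq_prod_roots
  have hlead : Wc.leadingCoeff ≠ 0 :=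
    leadingCoeff_ne_zero.mpr (Polynomial.map_ne_zero hroots.1)
  have hdvd : Wc ∣ p := by
    rw [hWc, (isUnit_C.mpr hlead.isUnit).mul_left_dvd]
    refine prod_X_sub_C_dvd hD (hH.continuousOn.const_smul Wc.leadingCoeff) _
      (fun a ha => hroots.2 a ?_) fun z hz => ?_
    · rw [← eval_map_algebraMap]
      exact isRoot_of_mem_roots ha
    · have hWz := congrArg (eval z) hWc
      rw [eval_map_algebraMap, eval_mul, eval_C] at hWz
      rw [show p.eval z = aeval z W * H z from hp z hz, hWz, Pi.smul_apply, smul_eq_mul]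
      ring
  refine eq_zero_of_dvd_of_degree_lt hdvd ?_
  rwa [degree_map, degree_eq_natDegree hroots.1]

/-- The polynomials `divX^[M] p, …, divX p, p, X p, X² p, …`, where `M = p.natDegree`: a basis
adapted to testing orthogonality, since the integrals of the first `M` members against `φ dμ` are
the coefficients of `cauchyQuotient μ φ p`. -/
def divXSequence {R : Type*} [CommRing R] [IsDomain R] {p : R[X]} (hp : p ≠ 0) :
    Polynomial.Sequence R where
  elems' i := if i < p.natDegree then divX^[p.natDegree - i] p else X ^ (i - p.natDegree) * p
  degree_eq' i := by
    split_ifs with hi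
    · have hdeg := natDegree_iterate_divX p (p.natDegree - i)
      rw [Nat.sub_sub_self hi.le] at hdeg
      rw [degree_eq_iff_natDegree_eq ?_, hdeg]
      intro h0
      have hcoeff := coeff_iterate_divX p (p.natDegree - i) i
      rw [h0, coeff_zero, Nat.add_sub_cancel' hi.le, coeff_natDegree] at hcoeff
      exact hp (leadingCoeff_eq_zero.mp hcoeff.symm)
    · rw [degree_mul, degree_X_pow, degree_eq_natDegree hp]
      exact_mod_cast Nat.sub_add_cancel (not_lt.mp hi)

namespace IsCarriedBy

variable {μ : Measure ℝ} {K : Set ℝ} {f : ℝ → ℂ} {W : ℝ[X]} {P : ℂ[X]} {F : ℂ → ℂ} {c : ℂ}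

theorem eq_cauchyQuotient_of_dvdOn (h : IsCarriedBy μ K) (hf : ContinuousOn f K)
    (hF : ∀ z ∈ (cpx K)ᶜ, F z = P.eval z + c * cauchyTransform μ f z)
    (hroots : RootsIn W (cpx K)ᶜ) (hdvd : DvdOn W F (cpx K)ᶜ) (hP : P.degree < W.natDegree) :
    P = c • cauchyQuotient μ (fun x => f x / aeval (x : ℂ) W) (W.map (algebraMap ℝ ℂ)) := by
  set g : ℝ → ℂ := fun x => f x / aeval (x : ℂ) W
  have hg : ContinuousOn g K := hf.div (by fun_prop) fun x hx => hroots.aeval_ne_zero hx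
  obtain ⟨H, hH, hFH⟩ := hdvd
  refine sub_eq_zero.mp (DvdOn.eq_zero_of_degree_lt (isOpen_compl_cpx h.isCompact) hroots
    ⟨fun z => H z - c * cauchyTransform μ g z,
      hH.sub ((h.differentiableOn_cauchyTransform hg).const_mul c), fun z hz => ?_⟩ ?_)
  · have hquot := h.eval_mul_cauchyTransform hg (W.map (algebraMap ℝ ℂ)) hz
    have hWg : cauchyTransform μ (fun x => (W.map (algebraMap ℝ ℂ)).eval (x : ℂ) * g x) z =
        cauchyTransform μ f z := h.integral_congr fun x hx => by
      simp only [g, eval_map_algebraMap, mul_div_cancel₀ _ (hroots.aeval_ne_zero hx)]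
    rw [hWg, eval_map_algebraMap] at hquot
    simp only [eval_sub, eval_smul, smul_eq_mul]
    linear_combination hFH z hz - hF z hz + c * hquot
  · refine (degree_sub_le _ _).trans_lt (max_lt hP ?_)
    refine (degree_smul_le _ _).trans_lt (degree_cauchyQuotient_lt _ _ ?_)
    rw [natDegree_map]

theorem orthLT_div_of_dvdOn (h : IsCarriedBy μ K) (hf : ContinuousOn f K)
    (hF : ∀ z ∈ (cpx K)ᶜ, F z = P.eval z + c * cauchyTransform μ f z) (hc : c ≠ 0) {d k N : ℕ}
    (hP : P.degree < d) (hforth : OrthLT μ f k) (hdk : d = 0 ∨ k = 0)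
    (hroots : RootsIn W (cpx K)ᶜ) (hdvd : DvdOn W F (cpx K)ᶜ) (hN : N + d ≤ W.natDegree + k) :
    OrthLT μ (fun x => f x / aeval (x : ℂ) W) N := by
  set g : ℝ → ℂ := fun x => f x / aeval (x : ℂ) W
  have hg : ContinuousOn g K := hf.div (by fun_prop) fun x hx => hroots.aeval_ne_zero hx
  set Wc := W.map (algebraMap ℝ ℂ)
  have hWc : Wc ≠ 0 := Polynomial.map_ne_zero hroots.1
  have hdegW : Wc.natDegree = W.natDegree := natDegree_map _
  refine h.orthLT_of_sequence hg (divXSequence hWc) fun i hi => ?_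
  simp only [divXSequence]
  split_ifs with hiW
  · have hPdeg : P.degree < W.natDegree := hP.trans_le (by exact_mod_cast (by lia))
    have hcoeff : P.coeff (Wc.natDegree - i - 1) = 0 :=
      coeff_eq_zero_of_degree_lt (hP.trans_le (by exact_mod_cast (by lia)))
    rw [h.eq_cauchyQuotient_of_dvdOn hf hF hroots hdvd hPdeg, coeff_smul, smul_eq_mul,
      coeff_cauchyQuotient, Nat.sub_add_cancel (by lia)] at hcoeff
    exact (mul_eq_zero.mp hcoeff).resolve_left hc
  · rw [← hforth (X ^ (i - Wc.natDegree))
      ((degree_X_pow _).trans_lt (by exact_mod_cast (by lia)))]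
    refine h.integral_congr fun x hx => ?_
    simp only [eval_mul, g, Wc, eval_map_algebraMap]
    rw [mul_assoc, mul_div_cancel₀ _ (hroots.aeval_ne_zero hx)]

end IsCarriedBy

/-! ## Sign changes and zeros -/

/-- `g` has constant sign, in the wide sense, on `s`. -/
def ConstSignOn (g : ℝ → ℝ) (s : Set ℝ) : Prop :=
  (∀ x ∈ s, 0 ≤ g x) ∨ ∀ x ∈ s, g x ≤ 0

namespace ConstSignOn

variable {μ : Measure ℝ} {K : Set ℝ} {f g : ℝ → ℝ}

theorem of_ne_zero (hK : IsPreconnected K) (hg : ContinuousOn g K) (h0 : ∀ x ∈ K, g x ≠ 0) :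
    ConstSignOn g K := by
  by_contra hsign
  simp only [ConstSignOn, not_or, not_forall, not_le] at hsign
  obtain ⟨⟨x, hx, hx0⟩, y, hy, hy0⟩ := hsign
  obtain ⟨t, ht, ht0⟩ := hK.intermediate_value hx hy hg ⟨hx0.le, hy0.le⟩
  exact h0 t ht ht0

theorem mul (hf : ConstSignOn f K) (hg : ConstSignOn g K) :
    ConstSignOn (fun x => f x * g x) K := by
  rcases hf with hf | hf <;> rcases hg with hg | hg
  · exact .inl fun x hx => mul_nonneg (hf x hx) (hg x hx)
  · exact .inr fun x hx => mul_nonpos_of_nonneg_of_nonpos (hf x hx) (hg x hx)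
  · exact .inr fun x hx => mul_nonpos_of_nonpos_of_nonneg (hf x hx) (hg x hx)
  · exact .inl fun x hx => mul_nonneg_of_nonpos_of_nonpos (hf x hx) (hg x hx)

theorem ae_eq_zero_of_integral_eq_zero (hsign : ConstSignOn g K) (h : IsCarriedBy μ K)
    (hg : ContinuousOn g K) (hint : ∫ x, g x ∂μ = 0) : g =ᵐ[μ] 0 := by
  rcases hsign with hsign | hsign
  · exact (integral_eq_zero_iff_of_nonneg_ae (h.ae_mem.mono hsign) (h.integrable hg)).mp hint
  · have hneg := (integral_eq_zero_iff_of_nonneg_ae (f := fun x => -g x)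
      (h.ae_mem.mono fun x hx => neg_nonneg.mpr (hsign x hx)) (h.integrable hg).neg).mp
      (by rw [integral_neg, hint, neg_zero])
    exact hneg.mono fun x hx => neg_eq_zero.mp hx

end ConstSignOn

/-- `F` is holomorphic on `D` and commutes there with complex conjugation, so that it is real on
the real points of `D`. -/
structure RealHolomorphicOn (F : ℂ → ℂ) (D : Set ℂ) : Prop where
  differentiableOn : DifferentiableOn ℂ F D
  map_conj : ∀ z ∈ D, F (starRingEnd ℂ z) = starRingEnd ℂ (F z)

namespace RealHolomorphicOn

variable {F H : ℂ → ℂ} {D : Set ℂ}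

theorem ofReal_re (hF : RealHolomorphicOn F D) {x : ℝ} (hx : (x : ℂ) ∈ D) :
    ((F x).re : ℂ) = F x := by
  have hconj := hF.map_conj x hx
  rw [Complex.conj_ofReal] at hconj
  exact Complex.conj_eq_iff_re.mp hconj.symm

theorem continuousOn_ofReal (hF : RealHolomorphicOn F D) {s : Set ℝ}
    (hs : ∀ x ∈ s, (x : ℂ) ∈ D) : ContinuousOn (fun x : ℝ => F x) s :=
  hF.differentiableOn.continuousOn.comp Complex.continuous_ofReal.continuousOn hs

theorem continuousOn_re (hF : RealHolomorphicOn F D) {s : Set ℝ}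
    (hs : ∀ x ∈ s, (x : ℂ) ∈ D) : ContinuousOn (fun x : ℝ => (F x).re) s :=
  Complex.continuous_re.comp_continuousOn (hF.continuousOn_ofReal hs)

theorem of_eq_aeval_mul (hF : RealHolomorphicOn F D) (hD : IsOpen D)
    (hconj : ∀ z ∈ D, starRingEnd ℂ z ∈ D) {W : ℝ[X]} (hW : W ≠ 0)
    (hH : DifferentiableOn ℂ H D) (hFH : ∀ z ∈ D, F z = aeval z W * H z) :
    RealHolomorphicOn H D := by
  refine ⟨hH, eqOn_of_eqOn_diff_finite hD (finite_setOf_aeval_eq_zero hW)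
    (hH.continuousOn.comp Complex.continuous_conj.continuousOn hconj)
    (Complex.continuous_conj.comp_continuousOn hH.continuousOn) fun z ⟨hz, hWz⟩ => ?_⟩
  have heq := hF.map_conj z hz
  rw [hFH z hz, hFH _ (hconj z hz), aeval_conj, map_mul] at heq
  exact mul_left_cancel₀ ((_root_.map_ne_zero _).mpr hWz) heq

end RealHolomorphicOn

/-- One level of a Nikishin chain: a measure carried by `[a, b]` and not by a finite set, together
with a conjugation-invariant domain `D` containing `[a, b]`, where the functions that are integrated
against the measure are holomorphic. -/
structure IsLevel (μ : Measure ℝ) (a b : ℝ) (D : Set ℂ) : Prop where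
  isCarriedBy : IsCarriedBy μ (Icc a b)
  measure_compl_ne_zero : ∀ s : Set ℝ, s.Finite → μ sᶜ ≠ 0
  isOpen : IsOpen D
  conj_mem : ∀ z ∈ D, starRingEnd ℂ z ∈ D
  ofReal_mem : ∀ x ∈ Icc a b, (x : ℂ) ∈ D

/-- `F` has at least `N` zeros in `D`, counted with multiplicity: it is divisible there by a
polynomial of degree at least `N` with all its roots in `D`. -/
def HasZeros (F : ℂ → ℂ) (D : Set ℂ) (N : ℕ) : Prop :=
  ∃ W : ℝ[X], N ≤ W.natDegree ∧ RootsIn W D ∧ DvdOn W F D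

/-- `F` has at least `r` zeros in `D` that do not produce sign changes on `[a, b]`: zeros outside
the interval, or pairs of coinciding zeros. These add to the zeros forced by orthogonality. -/
def HasSurplus (F : ℂ → ℂ) (D : Set ℂ) (a b : ℝ) (r : ℕ) : Prop :=
  ∃ V : ℝ[X], r ≤ V.natDegree ∧ RootsIn V D ∧ ConstSignOn (fun x => V.eval x) (Icc a b) ∧
    DvdOn V F D

section

variable {F G H : ℂ → ℂ} {D : Set ℂ} {a b : ℝ} {W : ℝ[X]} {N r : ℕ}

theorem dvdOn_one (hF : DifferentiableOn ℂ F D) : DvdOn 1 F D :=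
  ⟨F, hF, fun z _ => by rw [map_one, one_mul]⟩

theorem eq_sub_mul_dslope {z : ℂ} (hFz : F z = 0) (w : ℂ) : F w = (w - z) * dslope F z w := by
  rw [← smul_eq_mul, sub_smul_dslope, hFz, sub_zero]

theorem dvdOn_mul_X_sub_C (hD : IsOpen D) (hH : DifferentiableOn ℂ H D)
    (hFH : ∀ z ∈ D, F z = aeval z W * H z) {x : ℝ} (hx : (x : ℂ) ∈ D) (hHx : H x = 0) :
    DvdOn (W * (X - C x)) F D := by
  refine ⟨dslope H x, (Complex.differentiableOn_dslope (hD.mem_nhds hx)).mpr hH, fun z hz => ?_⟩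
  rw [hFH z hz, eq_sub_mul_dslope hHx z, map_mul, map_sub, aeval_X, aeval_C, mul_assoc]
  rfl

theorem hasSurplus_zero (hF : DifferentiableOn ℂ F D) : HasSurplus F D a b 0 :=
  ⟨1, Nat.zero_le _, .one, .inl fun x _ => by simp, dvdOn_one hF⟩

theorem HasZeros.mono {M : ℕ} (h : HasZeros F D N) (hMN : M ≤ N) : HasZeros F D M := by
  obtain ⟨W, hN, hW⟩ := h
  exact ⟨W, hMN.trans hN, hW⟩

theorem HasSurplus.mono {q : ℕ} (h : HasSurplus F D a b r) (hqr : q ≤ r) :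
    HasSurplus F D a b q := by
  obtain ⟨V, hr, hV⟩ := h
  exact ⟨V, hqr.trans hr, hV⟩

theorem HasSurplus.congr (h : HasSurplus F D a b r) (hFG : ∀ z ∈ D, F z = G z) :
    HasSurplus G D a b r := by
  obtain ⟨V, hr, hV, hsign, H, hH, hFH⟩ := h
  exact ⟨V, hr, hV, hsign, H, hH, fun z hz => (hFG z hz).symm.trans (hFH z hz)⟩

end

namespace IsLevel

variable {μ : Measure ℝ} {a b : ℝ} {D : Set ℂ} {F G H : ℂ → ℂ} {V W W₀ : ℝ[X]} {N r : ℕ}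

/-- Otherwise `V W² H / W₀` would have constant sign and vanishing integral. -/
theorem exists_zero_of_orthLT (h : IsLevel μ a b D) (hH : RealHolomorphicOn H D) (hV : V ≠ 0)
    (hVsign : ConstSignOn (fun x => V.eval x) (Icc a b)) (hW₀ : RootsIn W₀ (cpx (Icc a b))ᶜ)
    (hW : W ≠ 0) (hGH : ∀ z ∈ D, G z = aeval z (V * W) * H z)
    (horth : OrthLT μ (fun x => G x / aeval (x : ℂ) W₀) N) (hWN : W.natDegree < N) :
    ∃ x ∈ Icc a b, H x = 0 := by
  by_contra! hne
  have hre (x : ℝ) (hx : x ∈ Icc a b) : ((H x).re : ℂ) = H x := hH.ofReal_re (h.ofReal_mem x hx)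
  have hre_ne (x : ℝ) (hx : x ∈ Icc a b) : (H x).re ≠ 0 := fun h0 =>
    hne x hx (by rw [← hre x hx, h0, Complex.ofReal_zero])
  have hratio : ContinuousOn (fun x : ℝ => (H x).re / W₀.eval x) (Icc a b) :=
    (hH.continuousOn_re h.ofReal_mem).div (by fun_prop) fun x hx => hW₀.eval_ne_zero hx
  have hratio_ne (x : ℝ) (hx : x ∈ Icc a b) : (H x).re / W₀.eval x ≠ 0 :=
    div_ne_zero (hre_ne x hx) (hW₀.eval_ne_zero hx)
  have hsign : ConstSignOn (fun x => V.eval x * W.eval x ^ 2 * ((H x).re / W₀.eval x)) (Icc a b) :=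
    (hVsign.mul (.inl fun x _ => sq_nonneg _)).mul (.of_ne_zero isPreconnected_Icc hratio hratio_ne)
  have hint : ∫ x, V.eval x * W.eval x ^ 2 * ((H x).re / W₀.eval x) ∂μ = 0 := by
    rw [← Complex.ofReal_eq_zero, ← integral_complex_ofReal]
    refine (h.isCarriedBy.integral_congr fun x hx => ?_).trans (horth (W.map (algebraMap ℝ ℂ)) ?_)
    · simp only [eval_map_algebraMap, hGH x (h.ofReal_mem x hx), map_mul, aeval_ofReal]
      conv_rhs => rw [← hre x hx]
      push_cast
      ring
    · rw [degree_map, degree_eq_natDegree hW]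
      exact_mod_cast hWN
  have hzero := hsign.ae_eq_zero_of_integral_eq_zero h.isCarriedBy
    (ContinuousOn.mul (by fun_prop) hratio) hint
  refine h.measure_compl_ne_zero _ (finite_setOf_eval_eq_zero (mul_ne_zero hV hW)) ?_
  refine measure_mono_null (fun x hx => ?_) (mem_ae_iff.mp (hzero.and h.isCarriedBy.ae_mem))
  rintro ⟨hx0, hxab⟩
  simp only [Pi.zero_apply, mul_eq_zero, hratio_ne x hxab, or_false,
    pow_eq_zero_iff two_ne_zero] at hx0
  exact hx (by rwa [mem_ofPred_eq, eval_mul, mul_eq_zero])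

theorem exists_roots_of_orthLT (h : IsLevel μ a b D) (hG : RealHolomorphicOn G D) (hV : V ≠ 0)
    (hVsign : ConstSignOn (fun x => V.eval x) (Icc a b)) (hVG : DvdOn V G D)
    (hW₀ : RootsIn W₀ (cpx (Icc a b))ᶜ)
    (horth : OrthLT μ (fun x => G x / aeval (x : ℂ) W₀) N) :
    ∃ W : ℝ[X], W.natDegree = N ∧ RootsIn W (cpx (Icc a b)) ∧ DvdOn (V * W) G D := by
  suffices ∀ M ≤ N, ∃ W : ℝ[X], W.natDegree = M ∧ RootsIn W (cpx (Icc a b)) ∧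
    DvdOn (V * W) G D from this N le_rfl
  intro M hM
  induction M with
  | zero => exact ⟨1, natDegree_one, .one, by rwa [mul_one]⟩
  | succ M ih =>
    obtain ⟨W, hdeg, hroots, H, hH, hGH⟩ := ih (by lia)
    obtain ⟨x, hx, hHx⟩ := h.exists_zero_of_orthLT
      (hG.of_eq_aeval_mul h.isOpen h.conj_mem (mul_ne_zero hV hroots.1) hH hGH) hV hVsign hW₀
      hroots.1 hGH horth (by lia)
    refine ⟨W * (X - C x), ?_, hroots.mul (.X_sub_C (ofReal_mem_cpx.mpr hx)), ?_⟩
    · rw [natDegree_mul hroots.1 (X_sub_C_ne_zero x), natDegree_X_sub_C, hdeg]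
    · rw [← mul_assoc]
      exact dvdOn_mul_X_sub_C h.isOpen hH hGH (h.ofReal_mem x hx) hHx

theorem hasZeros_of_orthLT (h : IsLevel μ a b D) (hG : RealHolomorphicOn G D)
    (hsurplus : HasSurplus G D a b r) (hW₀ : RootsIn W₀ (cpx (Icc a b))ᶜ)
    (horth : OrthLT μ (fun x => G x / aeval (x : ℂ) W₀) N) : HasZeros G D (N + r) := by
  obtain ⟨V, hr, hV, hVsign, hVG⟩ := hsurplus
  obtain ⟨W, hdeg, hW, hdvd⟩ := h.exists_roots_of_orthLT hG hV.1 hVsign hVG hW₀ horth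
  refine ⟨V * W, ?_, hV.mul (hW.mono ?_), hdvd⟩
  · rw [natDegree_mul hV.1 hW.1]
    lia
  · rintro _ ⟨x, hx, rfl⟩
    exact h.ofReal_mem x hx

theorem hasZeros_of_cauchyTransform (h : IsLevel μ a b D) (hG : RealHolomorphicOn G D)
    {P : ℂ[X]} {c : ℂ}
    (hF : ∀ z ∈ (cpx (Icc a b))ᶜ, F z = P.eval z + c * cauchyTransform μ (fun x => G x) z)
    (hc : c ≠ 0) {d k M : ℕ} (hP : P.degree < d) (horth : OrthLT μ (fun x => G x) k)
    (hdk : d = 0 ∨ k = 0) (hzeros : HasZeros F (cpx (Icc a b))ᶜ M)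
    (hsurplus : HasSurplus G D a b r) (hN : N + d ≤ M + k) : HasZeros G D (N + r) := by
  obtain ⟨W₀, hM, hW₀, hdvd⟩ := hzeros
  exact h.hasZeros_of_orthLT hG hsurplus hW₀ (h.isCarriedBy.orthLT_div_of_dvdOn
    (hG.continuousOn_ofReal h.ofReal_mem) hF hc hP horth hdk hW₀ hdvd (by lia))

end IsLevel

/-! ## Nikishin systems and their linear forms -/

theorem Decr.le {m : ℕ} {n : ℕ → ℕ} (h : Decr m n) {j k : ℕ} (hjk : j ≤ k) (hk : k ≤ m) :
    n k ≤ n j := by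
  induction k, hjk using Nat.le_induction with
  | base => exact le_rfl
  | succ k _ ih => exact (h k hk).trans (ih (by lia))

theorem isCarriedBy_of_msupport_subset {μ : Measure ℝ} [IsFiniteMeasure μ] {K : Set ℝ}
    (hK : IsCompact K) (hμ : msupport μ ⊆ K) : IsCarriedBy μ K := by
  refine ⟨inferInstance, hK, measure_mono_null (compl_subset_compl.mpr hμ) ?_⟩
  refine measure_null_of_locally_null _ fun x hx => ?_
  simp only [msupport, mem_compl_iff, mem_ofPred_eq, not_forall, not_not] at hx
  obtain ⟨U, hU, hxU, h0⟩ := hx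
  exact ⟨U, mem_nhdsWithin_of_mem_nhds (hU.mem_nhds hxU), h0⟩

theorem measure_compl_ne_zero_of_msupport_infinite {μ : Measure ℝ} (hμ : (msupport μ).Infinite)
    {s : Set ℝ} (hs : s.Finite) : μ sᶜ ≠ 0 := by
  obtain ⟨x, hx, hxs⟩ := hμ.exists_notMem_finite hs
  exact hx sᶜ hs.isClosed.isOpen_compl hxs

/-- The region `ℂ ∖ Δ_{j+1}` (all of `ℂ` if `j = m`) in which the form of index `j ≥ 0` is
holomorphic. -/
def NikSys.dom {m : ℕ} (S : NikSys m) (j : ℕ) : Set ℂ :=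
  if j < m then (cpx (Icc (S.a (j + 1)) (S.b (j + 1))))ᶜ else univ

/-- The region in which the form of index `-i` is holomorphic. -/
def negDom {m₁ m₂ : ℕ} (S1 : NikSys m₁) (S2 : NikSys m₂) : ℕ → Set ℂ
  | 0 => S1.dom 0
  | i + 1 => (cpx (Icc (S2.a i) (S2.b i)))ᶜ

theorem ofReal_mem_compl_cpx {s t : Set ℝ} (hst : Disjoint s t) {x : ℝ} (hx : x ∈ s) :
    (x : ℂ) ∈ (cpx t)ᶜ :=
  fun h => hst.notMem_of_mem_left hx (ofReal_mem_cpx.mp h)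

namespace NikSys

variable {m : ℕ} (S : NikSys m) {j : ℕ}

theorem e_ne_zero (j : ℕ) : (S.e j : ℂ) ≠ 0 := by
  rcases S.sgn j with h | h <;> simp [h]

theorem disjoint_Icc (hj : j < m) :
    Disjoint (Icc (S.a j) (S.b j)) (Icc (S.a (j + 1)) (S.b (j + 1))) :=
  disjoint_iff_inter_eq_empty.mpr (S.disj j hj)

theorem dom_of_lt (hj : j < m) : S.dom j = (cpx (Icc (S.a (j + 1)) (S.b (j + 1))))ᶜ := if_pos hj

theorem msupport_subset_Icc (hj : j ≤ m) : msupport (S.μ j) ⊆ Icc (S.a j) (S.b j) :=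
  S.hull j hj ▸ subset_convexHull ℝ _

theorem isCarriedBy (hj : j ≤ m) : IsCarriedBy (S.μ j) (Icc (S.a j) (S.b j)) :=
  have := S.fin j
  isCarriedBy_of_msupport_subset isCompact_Icc (S.msupport_subset_Icc hj)

theorem isLevel (hj : j ≤ m) : IsLevel (S.μ j) (S.a j) (S.b j) (S.dom j) where
  isCarriedBy := S.isCarriedBy hj
  measure_compl_ne_zero _ hs := measure_compl_ne_zero_of_msupport_infinite (S.inf j hj) hs
  isOpen := by
    unfold dom
    split_ifs
    exacts [isOpen_compl_cpx isCompact_Icc, isOpen_univ]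
  conj_mem z hz := by
    unfold dom at hz ⊢
    split_ifs at hz ⊢
    exacts [conj_mem_compl_cpx hz, mem_univ _]
  ofReal_mem x hx := by
    unfold dom
    split_ifs with h
    exacts [ofReal_mem_compl_cpx (S.disjoint_Icc h) hx, mem_univ _]

theorem endpoints_zero_eq {m₁ m₂ : ℕ} {S1 : NikSys m₁} {S2 : NikSys m₂} (hb : S1.μ 0 = S2.μ 0) :
    S1.a 0 = S2.a 0 ∧ S1.b 0 = S2.b 0 := by
  have hle : S1.a 0 ≤ S1.b 0 := nonempty_Icc.mp
    ((S1.inf 0 (Nat.zero_le _)).nonempty.mono (S1.msupport_subset_Icc (Nat.zero_le _)))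
  have hIcc : Icc (S1.a 0) (S1.b 0) = Icc (S2.a 0) (S2.b 0) := by
    rw [← S1.hull 0 (Nat.zero_le _), ← S2.hull 0 (Nat.zero_le _), hb]
  exact (Icc_eq_Icc_iff hle).mp hIcc

theorem isLevel_negDom {m₁ m₂ : ℕ} {S1 : NikSys m₁} {S2 : NikSys m₂} (hb : S1.μ 0 = S2.μ 0) {i : ℕ}
    (hi : i ≤ m₂) : IsLevel (S2.μ i) (S2.a i) (S2.b i) (negDom S1 S2 i) := by
  cases i with
  | zero =>
    obtain ⟨ha, hb'⟩ := endpoints_zero_eq hb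
    rw [← hb, ← ha, ← hb']
    exact S1.isLevel (Nat.zero_le _)
  | succ i =>
    have h := S2.isLevel hi
    exact ⟨h.isCarriedBy, h.measure_compl_ne_zero, isOpen_compl_cpx isCompact_Icc,
      fun _ => conj_mem_compl_cpx, fun _ => ofReal_mem_compl_cpx (S2.disjoint_Icc hi).symm⟩

end NikSys

theorem wt_of_le {μ : ℕ → Measure ℝ} {e : ℕ → ℝ} {j k : ℕ} (hkj : k ≤ j) (z : ℂ) :
    wt μ e j k z = 1 := if_neg hkj.not_gt

theorem wt_of_lt (μ : ℕ → Measure ℝ) (e : ℕ → ℝ) {j k : ℕ} (hjk : j < k) (z : ℂ) :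
    wt μ e j k z =
      e (j + 1) * cauchyTransform (μ (j + 1)) (fun t => wt μ e (j + 1) k t) z := by
  rw [wt, if_pos hjk]
  rcases Nat.lt_or_ge (j + 1) k with h | h
  · obtain ⟨g, rfl⟩ : ∃ g, k = j + 1 + 1 + g := ⟨k - (j + 1 + 1), by lia⟩
    rw [show j + 1 + 1 + g - (j + 1) = g + 1 by lia, nikhat, cauchyTransform]
    simp only [wt, if_pos h, Nat.add_sub_cancel_left]
  · simp only [wt_of_le h]
    rw [show k - (j + 1) = 0 by lia, nikhat, cauchyTransform]

theorem RealHolomorphicOn.const_mul_cauchyTransform {μ : Measure ℝ} {a b : ℝ} {D : Set ℂ}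
    {F : ℂ → ℂ} (hF : RealHolomorphicOn F D) (h : IsLevel μ a b D) (e : ℝ) :
    RealHolomorphicOn (fun z => e * cauchyTransform μ (fun x => F x) z) (cpx (Icc a b))ᶜ := by
  refine ⟨(h.isCarriedBy.differentiableOn_cauchyTransform
    (hF.continuousOn_ofReal h.ofReal_mem)).const_mul _, fun z _ => ?_⟩
  rw [map_mul, Complex.conj_ofReal, cauchyTransform, cauchyTransform, ← integral_conj]
  refine congrArg _ (h.isCarriedBy.integral_congr fun x hx => ?_)
  rw [map_div₀, map_sub, Complex.conj_ofReal, ← hF.map_conj x (h.ofReal_mem x hx),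
    Complex.conj_ofReal]

theorem NikSys.realHolomorphicOn_wt {m : ℕ} (S : NikSys m) {j k : ℕ} (hk : k ≤ m) :
    RealHolomorphicOn (wt S.μ S.e j k) (S.dom j) := by
  induction hg : k - j generalizing j with
  | zero =>
    rw [show wt S.μ S.e j k = fun _ => 1 from funext fun z => wt_of_le (by lia) z]
    exact ⟨differentiableOn_const _, fun _ _ => (map_one _).symm⟩
  | succ g ih =>
    rw [show wt S.μ S.e j k = _ from funext fun z => wt_of_lt S.μ S.e (by lia) z,
      S.dom_of_lt (by lia)]
    exact (ih (by lia)).const_mul_cauchyTransform (S.isLevel (by lia)) _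

/-- The linear form `𝒜_{n,j}`, `j ≥ 0`. -/
abbrev posForm {m : ℕ} (S : NikSys m) (A : ℕ → ℝ[X]) (j : ℕ) : ℂ → ℂ :=
  linForm S.μ S.e m j A

/-- The linear form `𝒜_{n,-i}`, `i ≥ 0`. -/
abbrev negForm {m₁ m₂ : ℕ} (S1 : NikSys m₁) (S2 : NikSys m₂) (A : ℕ → ℝ[X]) (i : ℕ) : ℂ → ℂ :=
  linFormNeg S2.μ S2.e (posForm S1 A 0) i

section PosForm

variable {m : ℕ} {S : NikSys m} {A A' : ℕ → ℝ[X]} {n : ℕ → ℕ} {j : ℕ}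

theorem realHolomorphicOn_posForm (S : NikSys m) (A : ℕ → ℝ[X]) (j : ℕ) :
    RealHolomorphicOn (posForm S A j) (S.dom j) := by
  refine ⟨DifferentiableOn.fun_sum fun k hk =>
    (Polynomial.differentiable_aeval (A k)).differentiableOn.mul
      (S.realHolomorphicOn_wt (Finset.mem_Icc.mp hk).2).differentiableOn, fun z hz => ?_⟩
  rw [posForm, linForm, linForm, map_sum]
  refine Finset.sum_congr rfl fun k hk => ?_
  rw [map_mul, (S.realHolomorphicOn_wt (Finset.mem_Icc.mp hk).2).map_conj z hz, aeval_conj]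

theorem posForm_smul_add_smul (α β : ℝ) (z : ℂ) :
    posForm S (α • A + β • A') j z = α * posForm S A j z + β * posForm S A' j z := by
  simp only [posForm, linForm, Pi.add_apply, Pi.smul_apply, map_add, map_smul, Complex.real_smul,
    Finset.mul_sum, ← Finset.sum_add_distrib]
  exact Finset.sum_congr rfl fun k _ => by ring

theorem posForm_eq_aeval_of_tail_eq_zero (hj : j ≤ m) (hA : ∀ k, j < k → k ≤ m → A k = 0) (z : ℂ) :
    posForm S A j z = aeval z (A j) := by
  rw [posForm, linForm, Finset.sum_eq_single_of_mem j (Finset.left_mem_Icc.mpr hj), wt_of_le le_rfl,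
    mul_one]
  intro k hk hkj
  obtain ⟨hjk, hkm⟩ := Finset.mem_Icc.mp hk
  rw [hA k (by lia) hkm, map_zero, zero_mul]

theorem aeval_mul_wt (hj : j < m) (A : ℕ → ℝ[X]) {k : ℕ} (hk : k ∈ Finset.Icc (j + 1) m) {z : ℂ}
    (hz : z ∈ (cpx (Icc (S.a (j + 1)) (S.b (j + 1))))ᶜ) :
    aeval z (A k) * wt S.μ S.e j k z =
      S.e (j + 1) * ((cauchyQuotient (S.μ (j + 1)) (fun x => wt S.μ S.e (j + 1) k x)
          ((A k).map (algebraMap ℝ ℂ))).eval z +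
        cauchyTransform (S.μ (j + 1)) (fun x => aeval (x : ℂ) (A k) * wt S.μ S.e (j + 1) k x)
          z) := by
  have hk := Finset.mem_Icc.mp hk
  have hwt := (S.realHolomorphicOn_wt (j := j + 1) hk.2).continuousOn_ofReal
    (S.isLevel hj).ofReal_mem
  have hquot := (S.isCarriedBy hj).eval_mul_cauchyTransform hwt ((A k).map (algebraMap ℝ ℂ)) hz
  simp only [eval_map_algebraMap] at hquot
  rw [← hquot, wt_of_lt _ _ hk.1]
  ring

theorem cauchyTransform_posForm (hj : j ≤ m) (A : ℕ → ℝ[X]) {z : ℂ}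
    (hz : z ∈ (cpx (Icc (S.a j) (S.b j)))ᶜ) :
    cauchyTransform (S.μ j) (fun x => posForm S A j x) z =
      ∑ k ∈ Finset.Icc j m,
        cauchyTransform (S.μ j) (fun x => aeval (x : ℂ) (A k) * wt S.μ S.e j k x) z := by
  simp only [cauchyTransform]
  rw [← integral_finsetSum]
  · simp only [posForm, linForm, Finset.sum_div]
  · intro k hk
    have hwt := (S.realHolomorphicOn_wt (j := j) (Finset.mem_Icc.mp hk).2).continuousOn_ofReal
      (S.isLevel hj).ofReal_mem
    exact (S.isCarriedBy hj).integrable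
      (IsCarriedBy.continuousOn_div_sub (ContinuousOn.mul (by fun_prop) hwt) hz)

theorem exists_posForm_eq_eval_add_cauchyTransform (hn : Decr m n)
    (hdeg : ∀ k ≤ m, (A k).degree < n k) (hj : j < m) :
    ∃ P : ℂ[X], P.degree < n j ∧ ∀ z ∈ (cpx (Icc (S.a (j + 1)) (S.b (j + 1))))ᶜ,
      posForm S A j z = P.eval z +
        S.e (j + 1) * cauchyTransform (S.μ (j + 1)) (fun x => posForm S A (j + 1) x) z := by
  have hdeg' {k : ℕ} (hjk : j ≤ k) (hk : k ≤ m) : (A k).degree < n j :=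
    (hdeg k hk).trans_le (by exact_mod_cast hn.le hjk hk)
  refine ⟨(A j).map (algebraMap ℝ ℂ) + ∑ k ∈ Finset.Icc (j + 1) m, C (S.e (j + 1) : ℂ) *
    cauchyQuotient (S.μ (j + 1)) (fun x => wt S.μ S.e (j + 1) k x) ((A k).map (algebraMap ℝ ℂ)),
    ?_, fun z hz => ?_⟩
  · rw [← mem_degreeLT]
    refine add_mem (mem_degreeLT.mpr ?_) (sum_mem fun k hk => ?_)
    · rw [degree_map]
      exact hdeg' le_rfl hj.le
    · have hk := Finset.mem_Icc.mp hk
      rw [← smul_eq_C_mul]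
      refine Submodule.smul_mem _ _ (mem_degreeLT.mpr (degree_cauchyQuotient_lt _ _ ?_))
      rw [natDegree_map]
      exact natDegree_le_of_degree_le (hdeg' (by lia) hk.2).le
  · rw [posForm, linForm, ← Finset.insert_Icc_add_one_left_eq_Icc hj.le,
      Finset.sum_insert (by simp), wt_of_le le_rfl, mul_one, cauchyTransform_posForm hj A hz,
      Finset.sum_congr rfl fun k hk => aeval_mul_wt hj A hk hz]
    simp only [eval_add, eval_map_algebraMap, eval_finsetSum, eval_mul, eval_C, mul_add,
      Finset.sum_add_distrib, Finset.mul_sum, add_assoc]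

end PosForm

section NegForm

variable {m₁ m₂ : ℕ} {S1 : NikSys m₁} {S2 : NikSys m₂} {A A' : ℕ → ℝ[X]} {i : ℕ}

theorem negForm_succ (S1 : NikSys m₁) (S2 : NikSys m₂) (A : ℕ → ℝ[X]) (i : ℕ) (z : ℂ) :
    negForm S1 S2 A (i + 1) z =
      S2.e i * cauchyTransform (S2.μ i) (fun x => negForm S1 S2 A i x) z := rfl

theorem realHolomorphicOn_negForm (hb : S1.μ 0 = S2.μ 0) (A : ℕ → ℝ[X]) (hi : i ≤ m₂) :
    RealHolomorphicOn (negForm S1 S2 A i) (negDom S1 S2 i) := by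
  induction i with
  | zero => exact realHolomorphicOn_posForm S1 A 0
  | succ i ih =>
    exact (ih (by lia)).const_mul_cauchyTransform (NikSys.isLevel_negDom hb (by lia)) _

theorem continuousOn_negForm (hb : S1.μ 0 = S2.μ 0) (A : ℕ → ℝ[X]) (hi : i ≤ m₂) :
    ContinuousOn (fun x : ℝ => negForm S1 S2 A i x) (Icc (S2.a i) (S2.b i)) :=
  (realHolomorphicOn_negForm hb A hi).continuousOn_ofReal
    (NikSys.isLevel_negDom hb hi).ofReal_mem

theorem negForm_smul_add_smul (hb : S1.μ 0 = S2.μ 0) (α β : ℝ) (hi : i ≤ m₂) {z : ℂ}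
    (hz : z ∈ negDom S1 S2 i) :
    negForm S1 S2 (α • A + β • A') i z = α * negForm S1 S2 A i z + β * negForm S1 S2 A' i z := by
  induction i generalizing z with
  | zero => exact posForm_smul_add_smul α β z
  | succ i ih =>
    have hi' : i ≤ m₂ := by lia
    have h := NikSys.isLevel_negDom hb hi'
    have hcomb : cauchyTransform (S2.μ i) (fun x => negForm S1 S2 (α • A + β • A') i x) z = _ :=
      (h.isCarriedBy.integral_congr fun x hx => by
        simp only [ih hi' (h.ofReal_mem x hx)]).trans
      (h.isCarriedBy.cauchyTransform_smul_add_smul (continuousOn_negForm hb A hi')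
        (continuousOn_negForm hb A' hi') α β hz)
    rw [negForm_succ, negForm_succ, negForm_succ, hcomb]
    ring

end NegForm

/-! ## Transport of orthogonality along the second system -/

theorem OrthLT.const_mul {μ : Measure ℝ} {f : ℝ → ℂ} {N : ℕ} (h : OrthLT μ f N) (c : ℂ) :
    OrthLT μ (fun x => c * f x) N := fun q hq => by
  simp only [mul_left_comm _ c]
  rw [integral_const_mul, h q hq, mul_zero]

theorem OrthLT.cauchyTransform_mul {μ ν : Measure ℝ} {K L : Set ℝ} {f w : ℝ → ℂ} {N₁ N₂ : ℕ}
    (hμ : IsCarriedBy μ K) (hν : IsCarriedBy ν L) (hKL : Disjoint K L) (hf : ContinuousOn f K)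
    (hw : ContinuousOn w L) (horth : OrthLT μ f N₁)
    (horth' : OrthLT μ (fun x => f x * cauchyTransform ν w x) N₂) (hN : N₂ ≤ N₁) :
    OrthLT ν (fun x => cauchyTransform μ f x * w x) N₂ := by
  intro q hq
  have hK (t : ℝ) (ht : t ∈ K) : (t : ℂ) ∈ (cpx L)ᶜ := ofReal_mem_compl_cpx hKL ht
  have hCw : ContinuousOn (fun t : ℝ => cauchyTransform ν w t) K :=
    (hν.differentiableOn_cauchyTransform hw).continuousOn.comp
      Complex.continuous_ofReal.continuousOn hK
  have hfC : ContinuousOn (fun t => f t * cauchyTransform ν w t) K := hf.mul hCw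
  have hQ : (cauchyQuotient ν w q).degree < N₁ :=
    (degree_cauchyQuotient_lt ν w (natDegree_le_of_degree_le hq.le)).trans_le
      (by exact_mod_cast hN)
  calc ∫ x, q.eval (x : ℂ) * (cauchyTransform μ f x * w x) ∂ν
      = ∫ x, (q.eval (x : ℂ) * w x) * cauchyTransform μ f x ∂ν :=
        hν.integral_congr fun x _ => by ring
    _ = -∫ t, f t * cauchyTransform ν (fun x => q.eval (x : ℂ) * w x) t ∂μ :=
        hμ.integral_mul_cauchyTransform_comm hν hKL hf (by fun_prop)
    _ = -∫ t, (q.eval (t : ℂ) * (f t * cauchyTransform ν w t) -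
          (cauchyQuotient ν w q).eval (t : ℂ) * f t) ∂μ := by
        rw [hμ.integral_congr fun t ht => ?_]
        linear_combination -f t * hν.eval_mul_cauchyTransform hw q (hK t ht)
    _ = 0 := by
        rw [integral_sub (hμ.integrable_eval_mul hfC q) (hμ.integrable_eval_mul hf _),
          horth' q hq, horth _ hQ, sub_zero, neg_zero]

/-- The conditions on the coefficients `A` in the definition of mixed type multiple orthogonal
polynomials for decreasing multi-indices, without the requirement that `A` be nonzero, so that they
are preserved under linear combinations. -/
structure MixedOrth {m₁ m₂ : ℕ} (S1 : NikSys m₁) (S2 : NikSys m₂) (n1 n2 : ℕ → ℕ)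
    (A : ℕ → ℝ[X]) : Prop where
  measure_zero_eq : S1.μ 0 = S2.μ 0
  decr_left : Decr m₁ n1
  decr_right : Decr m₂ n2
  degree_lt : ∀ j ≤ m₁, (A j).degree < n1 j
  sInt_eq_zero : ∀ k ≤ m₂, ∀ ν < n2 k,
    sInt S2.μ S2.e 0 k (fun x => (x : ℂ) ^ ν * posForm S1 A 0 x) = 0

namespace MixedOrth

variable {m₁ m₂ : ℕ} {S1 : NikSys m₁} {S2 : NikSys m₂} {n1 n2 : ℕ → ℕ} {A : ℕ → ℝ[X]} {i : ℕ}

theorem isLevel (h : MixedOrth S1 S2 n1 n2 A) (hi : i ≤ m₂) :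
    IsLevel (S2.μ i) (S2.a i) (S2.b i) (negDom S1 S2 i) :=
  NikSys.isLevel_negDom h.measure_zero_eq hi

theorem realHolomorphicOn (h : MixedOrth S1 S2 n1 n2 A) (hi : i ≤ m₂) :
    RealHolomorphicOn (negForm S1 S2 A i) (negDom S1 S2 i) :=
  realHolomorphicOn_negForm h.measure_zero_eq A hi

theorem orthLT_negForm_mul_wt (h : MixedOrth S1 S2 n1 n2 A) {k : ℕ} (hik : i ≤ k) (hk : k ≤ m₂) :
    OrthLT (S2.μ i) (fun x => negForm S1 S2 A i x * wt S2.μ S2.e i k x) (n2 k) := by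
  have hL {i : ℕ} (hi : i ≤ m₂) := continuousOn_negForm h.measure_zero_eq A hi
  have hw (i : ℕ) (hi : i ≤ m₂) := (S2.realHolomorphicOn_wt (j := i) hk).continuousOn_ofReal
    (S2.isLevel hi).ofReal_mem
  induction i generalizing k with
  | zero =>
    refine (S2.isCarriedBy (Nat.zero_le _)).orthLT_of_moments
      ((hL (Nat.zero_le _)).mul (hw 0 (Nat.zero_le _))) fun ν hν => ?_
    simp only [Pi.mul_apply, ← mul_assoc]
    exact (mul_eq_zero.mp (h.sInt_eq_zero k hk ν hν)).resolve_left (S2.e_ne_zero 0)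
  | succ i ih =>
    have hi : i ≤ m₂ := by lia
    have horth := ih le_rfl hi fun i hi => (S2.realHolomorphicOn_wt (by lia)).continuousOn_ofReal
      (S2.isLevel hi).ofReal_mem
    simp only [wt_of_le le_rfl, mul_one] at horth
    have horth' := (ih (by lia) hk hw).const_mul (S2.e (i + 1) : ℂ)⁻¹
    simp only [wt_of_lt _ _ (show i < k by lia), mul_left_comm (negForm _ _ _ _ _),
      inv_mul_cancel_left₀ (S2.e_ne_zero (i + 1))] at horth'
    simp only [negForm_succ, mul_assoc]
    exact (OrthLT.cauchyTransform_mul (S2.isCarriedBy hi) (S2.isCarriedBy (by lia))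
      (S2.disjoint_Icc (by lia)) (hL hi) (hw (i + 1) (by lia)) horth horth'
      (h.decr_right.le (by lia) hk)).const_mul _

theorem orthLT_negForm (h : MixedOrth S1 S2 n1 n2 A) (hi : i ≤ m₂) :
    OrthLT (S2.μ i) (fun x => negForm S1 S2 A i x) (n2 i) := by
  simpa only [wt_of_le le_rfl, mul_one] using h.orthLT_negForm_mul_wt le_rfl hi

end MixedOrth

/-! ## Counting zeros along the chain of forms -/

theorem tailSum_eq_add {m j : ℕ} (n : ℕ → ℕ) (hj : j ≤ m) :
    tailSum m n j = n j + tailSum m n (j + 1) := by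
  rw [tailSum, ← Finset.insert_Icc_add_one_left_eq_Icc hj, Finset.sum_insert (by simp), tailSum]

theorem tailSum_anti (m : ℕ) (n : ℕ → ℕ) : Antitone (tailSum m n) := fun _ _ h =>
  Finset.sum_le_sum_of_subset (Finset.Icc_subset_Icc_left h)

theorem sum_range_add_tailSum {m j : ℕ} (n : ℕ → ℕ) (hj : j ≤ m) :
    ∑ k ∈ Finset.range j, n k + tailSum m n j = msum m n := by
  rw [tailSum, msum, ← Finset.Ico_add_one_right_eq_Icc]
  exact Finset.sum_range_add_sum_Ico n (by lia)

namespace MixedOrth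

variable {m₁ m₂ : ℕ} {S1 : NikSys m₁} {S2 : NikSys m₂} {n1 n2 : ℕ → ℕ} {A : ℕ → ℝ[X]}
  {i j N r : ℕ}

theorem hasZeros_negForm_of_succ (h : MixedOrth S1 S2 n1 n2 A) (hi : i < m₂)
    (hzeros : HasZeros (negForm S1 S2 A (i + 1)) (negDom S1 S2 (i + 1)) N)
    (hsurplus : HasSurplus (negForm S1 S2 A i) (negDom S1 S2 i) (S2.a i) (S2.b i) r) :
    HasZeros (negForm S1 S2 A i) (negDom S1 S2 i) (N + n2 i + r) :=
  (h.isLevel hi.le).hasZeros_of_cauchyTransform (h.realHolomorphicOn hi.le) (P := 0)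
    (fun z _ => by rw [negForm_succ, eval_zero, zero_add]) (S2.e_ne_zero i) (d := 0)
    (by rw [degree_zero]; exact WithBot.bot_lt_coe 0) (h.orthLT_negForm hi.le) (.inl rfl) hzeros
    hsurplus le_rfl

theorem hasZeros_negForm (h : MixedOrth S1 S2 n1 n2 A) (hi : i ≤ m₂)
    (hsurplus : HasSurplus (negForm S1 S2 A i) (negDom S1 S2 i) (S2.a i) (S2.b i) r) :
    HasZeros (negForm S1 S2 A i) (negDom S1 S2 i) (tailSum m₂ n2 i + r) := by
  induction hg : m₂ - i generalizing i r with
  | zero =>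
    obtain rfl : i = m₂ := by lia
    have horth := h.orthLT_negForm hi
    rw [tailSum, Finset.Icc_self, Finset.sum_singleton]
    refine (h.isLevel hi).hasZeros_of_orthLT (h.realHolomorphicOn hi) hsurplus .one ?_
    simpa only [map_one, div_one] using horth
  | succ g ih =>
    rw [tailSum_eq_add n2 hi, add_comm (n2 i)]
    exact h.hasZeros_negForm_of_succ (by lia)
      (ih (by lia) (hasSurplus_zero (h.realHolomorphicOn (by lia)).differentiableOn) (by lia))
      hsurplus

theorem hasZeros_posForm_zero (h : MixedOrth S1 S2 n1 n2 A) (hi : i ≤ m₂)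
    (hzeros : HasZeros (negForm S1 S2 A i) (negDom S1 S2 i) N) :
    HasZeros (posForm S1 A 0) (S1.dom 0) (N + ∑ k ∈ Finset.range i, n2 k) := by
  induction i generalizing N with
  | zero => exact hzeros
  | succ i ih =>
    rw [Finset.sum_range_succ, add_comm _ (n2 i), ← add_assoc]
    exact ih (by lia) (h.hasZeros_negForm_of_succ hi hzeros
      (hasSurplus_zero (h.realHolomorphicOn (by lia)).differentiableOn))

theorem hasZeros_posForm_zero_of_hasSurplus (h : MixedOrth S1 S2 n1 n2 A) (hi : i ≤ m₂)
    (hsurplus : HasSurplus (negForm S1 S2 A i) (negDom S1 S2 i) (S2.a i) (S2.b i) r) :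
    HasZeros (posForm S1 A 0) (S1.dom 0) (msum m₂ n2 + r) :=
  (h.hasZeros_posForm_zero hi (h.hasZeros_negForm hi hsurplus)).mono
    (by have := sum_range_add_tailSum n2 hi; lia)

theorem hasZeros_posForm_succ (h : MixedOrth S1 S2 n1 n2 A) (hj : j < m₁)
    (hzeros : HasZeros (posForm S1 A j) (S1.dom j) (N + n1 j))
    (hsurplus :
      HasSurplus (posForm S1 A (j + 1)) (S1.dom (j + 1)) (S1.a (j + 1)) (S1.b (j + 1)) r) :
    HasZeros (posForm S1 A (j + 1)) (S1.dom (j + 1)) (N + r) := by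
  obtain ⟨P, hP, hrep⟩ := exists_posForm_eq_eval_add_cauchyTransform h.decr_left h.degree_lt hj
  rw [S1.dom_of_lt hj] at hzeros
  have hlevel := S1.isLevel (j := j + 1) hj
  have hreal := realHolomorphicOn_posForm S1 A (j + 1)
  refine hlevel.hasZeros_of_cauchyTransform hreal hrep (S1.e_ne_zero _) hP (k := 0)
    (hlevel.isCarriedBy.orthLT_of_moments (hreal.continuousOn_ofReal hlevel.ofReal_mem) ?_)
    (.inr rfl) hzeros hsurplus le_rfl
  exact fun ν hν => absurd hν ν.not_lt_zero

theorem hasZeros_posForm (h : MixedOrth S1 S2 n1 n2 A) (hj : j ≤ m₁)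
    (hN : N + ∑ k ∈ Finset.range j, n1 k ≤ msum m₂ n2)
    (hsurplus : HasSurplus (posForm S1 A j) (S1.dom j) (S1.a j) (S1.b j) r) :
    HasZeros (posForm S1 A j) (S1.dom j) (N + r) := by
  induction j generalizing N r with
  | zero =>
    obtain ⟨ha, hb⟩ := NikSys.endpoints_zero_eq h.measure_zero_eq
    rw [ha, hb] at hsurplus
    exact (h.hasZeros_posForm_zero_of_hasSurplus (Nat.zero_le _) hsurplus).mono (by
      rw [Finset.sum_range_zero] at hN
      lia)
  | succ j ih =>
    rw [Finset.sum_range_succ] at hN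
    exact h.hasZeros_posForm_succ hj (ih (N := N + n1 j) (r := 0) (by lia) (by lia)
      (hasSurplus_zero (realHolomorphicOn_posForm S1 A j).differentiableOn)) hsurplus

theorem hasZeros_posForm_tailSum (h : MixedOrth S1 S2 n1 n2 A) {s : ℕ} (hjs : j ≤ s) (hs : s ≤ m₁)
    (hzeros : HasZeros (posForm S1 A j) (S1.dom j) (tailSum m₁ n1 j)) :
    HasZeros (posForm S1 A s) (S1.dom s) (tailSum m₁ n1 s) := by
  induction s, hjs using Nat.le_induction with
  | base => exact hzeros
  | succ s _ ih =>
    have hzeros := ih (by lia)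
    rw [tailSum_eq_add n1 (by lia), add_comm] at hzeros
    exact h.hasZeros_posForm_succ hs hzeros
      (hasSurplus_zero (realHolomorphicOn_posForm S1 A (s + 1)).differentiableOn)

theorem eq_zero_of_hasZeros (h : MixedOrth S1 S2 n1 n2 A)
    (hzeros : ∀ s ≤ m₁, HasZeros (posForm S1 A s) (S1.dom s) (n1 s)) : ∀ k ≤ m₁, A k = 0 := by
  intro k hk
  induction hg : m₁ - k using Nat.strong_induction_on generalizing k with
  | _ g ih =>
    have htail (s : ℕ) (hks : k < s) (hs : s ≤ m₁) : A s = 0 := ih _ (by lia) s hs rfl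
    obtain ⟨W, hdeg, hroots, hdvd⟩ := hzeros k hk
    rw [funext (posForm_eq_aeval_of_tail_eq_zero hk htail)] at hdvd
    simp only [← eval_map_algebraMap] at hdvd
    refine (Polynomial.map_eq_zero (algebraMap ℝ ℂ)).mp
      (hdvd.eq_zero_of_degree_lt (S1.isLevel hk).isOpen hroots ?_)
    rw [degree_map]
    exact (h.degree_lt k hk).trans_le (by exact_mod_cast hdeg)

theorem eq_zero_of_hasSurplus_posForm (h : MixedOrth S1 S2 n1 n2 A)
    (hr : msum m₁ n1 ≤ msum m₂ n2 + r) (hj : j ≤ m₁) (hrj : r ≤ tailSum m₁ n1 j)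
    (hsurplus : HasSurplus (posForm S1 A j) (S1.dom j) (S1.a j) (S1.b j) r) :
    ∀ k ≤ m₁, A k = 0 := by
  refine h.eq_zero_of_hasZeros fun s hs => ?_
  have hsum_s := sum_range_add_tailSum n1 hs
  rw [tailSum_eq_add n1 hs] at hsum_s
  rcases lt_or_ge s j with hsj | hjs
  · have hanti := tailSum_anti m₁ n1 (show s + 1 ≤ j from hsj)
    exact h.hasZeros_posForm hs (by lia)
      (hasSurplus_zero (realHolomorphicOn_posForm S1 A s).differentiableOn)
  · have hsum_j := sum_range_add_tailSum n1 hj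
    have hzeros := h.hasZeros_posForm hj (N := tailSum m₁ n1 j - r) (by lia) hsurplus
    rw [Nat.sub_add_cancel hrj] at hzeros
    exact (h.hasZeros_posForm_tailSum hjs hs hzeros).mono
      (by rw [tailSum_eq_add n1 hs]; exact Nat.le_add_right _ _)

theorem eq_zero_of_hasSurplus_negForm (h : MixedOrth S1 S2 n1 n2 A)
    (hr : msum m₁ n1 ≤ msum m₂ n2 + r) (hi : i ≤ m₂)
    (hsurplus : HasSurplus (negForm S1 S2 A i) (negDom S1 S2 i) (S2.a i) (S2.b i) r) :
    ∀ k ≤ m₁, A k = 0 := by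
  have hzeros := (h.hasZeros_posForm_zero_of_hasSurplus hi hsurplus).mono hr
  rw [← sum_range_add_tailSum n1 (Nat.zero_le _), Finset.sum_range_zero, zero_add] at hzeros
  exact h.eq_zero_of_hasZeros fun s hs =>
    (h.hasZeros_posForm_tailSum (Nat.zero_le s) hs hzeros).mono
      (by rw [tailSum_eq_add n1 hs]; exact Nat.le_add_right _ _)

end MixedOrth

/-! ## Reality, simplicity and interlacing of zeros -/

theorem RealHolomorphicOn.deriv {F : ℂ → ℂ} {D : Set ℂ} (hF : RealHolomorphicOn F D)
    (hD : IsOpen D) : RealHolomorphicOn (deriv F) D := by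
  refine ⟨hF.differentiableOn.deriv hD, fun z hz => ?_⟩
  have hconj : (starRingEnd ℂ ∘ F ∘ starRingEnd ℂ) =ᶠ[nhds z] F :=
    (hD.eventually_mem hz).mono fun w hw => by
      rw [Function.comp_apply, Function.comp_apply, hF.map_conj w hw, Complex.conj_conj]
  rw [← hconj.deriv_eq, deriv_conj_conj, Function.comp_apply, Function.comp_apply,
    Complex.conj_conj]

theorem RealHolomorphicOn.hasDerivAt_re {F : ℂ → ℂ} {D : Set ℂ} (hF : RealHolomorphicOn F D)
    (hD : IsOpen D) {x : ℝ} (hx : (x : ℂ) ∈ D) :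
    HasDerivAt (fun y : ℝ => (F y).re) (_root_.deriv F x).re x :=
  (hF.differentiableOn.differentiableAt (hD.mem_nhds hx)).hasDerivAt.real_of_complex

section

variable {F : ℂ → ℂ} {D : Set ℂ} {a b : ℝ}

theorem hasSurplus_of_notMem_Ioo (hD : IsOpen D) (hF : DifferentiableOn ℂ F D) {x : ℝ}
    (hx : (x : ℂ) ∈ D) (hFx : F x = 0) (hxab : x ∉ Ioo a b) : HasSurplus F D a b 1 := by
  refine ⟨X - C x, (natDegree_X_sub_C x).ge, .X_sub_C hx, ?_, ?_⟩
  · simp only [eval_sub, eval_X, eval_C]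
    rcases le_or_gt x a with h | h
    · exact .inl fun y hy => sub_nonneg.mpr (h.trans hy.1)
    · exact .inr fun y hy => sub_nonpos.mpr (hy.2.trans (not_lt.mp fun hxb => hxab ⟨h, hxb⟩))
  · rw [← one_mul (X - C x)]
    exact dvdOn_mul_X_sub_C hD hF (fun z _ => by rw [map_one, one_mul]) hx hFx

theorem hasSurplus_of_deriv_eq_zero (hD : IsOpen D) (hF : DifferentiableOn ℂ F D) {x : ℝ}
    (hx : (x : ℂ) ∈ D) (hFx : F x = 0) (hderiv : deriv F x = 0) : HasSurplus F D a b 2 := by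
  refine ⟨(X - C x) * (X - C x), ?_, (RootsIn.X_sub_C hx).mul (.X_sub_C hx),
    .inl fun y _ => ?_, ?_⟩
  · rw [natDegree_mul (X_sub_C_ne_zero x) (X_sub_C_ne_zero x), natDegree_X_sub_C]
  · simp only [eval_mul]
    exact mul_self_nonneg _
  · refine dvdOn_mul_X_sub_C hD ((Complex.differentiableOn_dslope (hD.mem_nhds hx)).mpr hF)
      (fun z _ => ?_) hx ((dslope_same F _).trans hderiv)
    rw [eq_sub_mul_dslope hFx z, map_sub, aeval_X, aeval_C]
    rfl

theorem hasSurplus_of_im_ne_zero (hD : IsOpen D) (hconj : ∀ z ∈ D, starRingEnd ℂ z ∈ D)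
    (hF : RealHolomorphicOn F D) {z : ℂ} (hz : z ∈ D) (hFz : F z = 0) (him : z.im ≠ 0) :
    HasSurplus F D a b 2 := by
  have hfactor (w : ℂ) : aeval w ((X - C z.re) ^ 2 + C (z.im ^ 2)) =
      (w - z) * (w - starRingEnd ℂ z) := by
    have hadd := Complex.add_conj z
    have hmul := Complex.mul_conj z
    rw [Complex.normSq_apply] at hmul
    simp only [map_add, map_pow, map_sub, aeval_X, aeval_C, Complex.coe_algebraMap]
    push_cast at hadd hmul
    linear_combination w * hadd - hmul
  have hmonic : ((X - C z.re) ^ 2 + C (z.im ^ 2)).natDegree = 2 := by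
    rw [natDegree_add_C, natDegree_pow, natDegree_X_sub_C]
  have hslope := (Complex.differentiableOn_dslope (hD.mem_nhds hz)).mpr hF.differentiableOn
  have hslope_conj : dslope F z (starRingEnd ℂ z) = 0 := by
    have hzero := eq_sub_mul_dslope hFz (starRingEnd ℂ z)
    rw [hF.map_conj z hz, hFz, map_zero, eq_comm, mul_eq_zero, sub_eq_zero] at hzero
    exact hzero.resolve_left fun h => him (Complex.conj_eq_iff_im.mp h)
  refine ⟨(X - C z.re) ^ 2 + C (z.im ^ 2), hmonic.ge, ⟨fun h0 => ?_, fun w hw => ?_⟩,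
    .inl fun x _ => ?_, dslope (dslope F z) (starRingEnd ℂ z),
    (Complex.differentiableOn_dslope (hD.mem_nhds (hconj z hz))).mpr hslope, fun w _ => ?_⟩
  · rw [h0, natDegree_zero] at hmonic
    exact absurd hmonic (by decide)
  · rw [hfactor, mul_eq_zero, sub_eq_zero, sub_eq_zero] at hw
    rcases hw with rfl | rfl
    exacts [hz, hconj z hz]
  · simp only [eval_add, eval_pow, eval_sub, eval_X, eval_C]
    positivity
  · rw [hfactor, mul_assoc, ← eq_sub_mul_dslope hslope_conj, ← eq_sub_mul_dslope hFz]

theorem simple_zero_of_not_hasSurplus (hD : IsOpen D) (hconj : ∀ z ∈ D, starRingEnd ℂ z ∈ D)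
    (hF : RealHolomorphicOn F D) (hsurplus : ¬HasSurplus F D a b 1) {z : ℂ} (hz : z ∈ D)
    (hFz : F z = 0) : z.im = 0 ∧ z.re ∈ Ioo a b ∧ deriv F z ≠ 0 := by
  have him : z.im = 0 := by
    by_contra him
    exact hsurplus ((hasSurplus_of_im_ne_zero hD hconj hF hz hFz him).mono one_le_two)
  lift z to ℝ using him
  refine ⟨Complex.ofReal_im z, ?_, fun hderiv => ?_⟩
  · by_contra hmem
    exact hsurplus (hasSurplus_of_notMem_Ioo hD hF.differentiableOn hz hFz hmem)
  · exact hsurplus ((hasSurplus_of_deriv_eq_zero hD hF.differentiableOn hz hFz hderiv).mono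
      one_le_two)

end

/-- Otherwise Rolle's theorem applies to `f / g`. -/
theorem exists_zero_between_of_wronskian_ne_zero {f g f' g' : ℝ → ℝ} {x₁ x₂ : ℝ} (h12 : x₁ < x₂)
    (hf : ∀ x ∈ Icc x₁ x₂, HasDerivAt f (f' x) x) (hg : ∀ x ∈ Icc x₁ x₂, HasDerivAt g (g' x) x)
    (hwronskian : ∀ x ∈ Icc x₁ x₂, f' x * g x - f x * g' x ≠ 0) (hf₁ : f x₁ = 0) (hf₂ : f x₂ = 0) :
    ∃ y ∈ Ioo x₁ x₂, g y = 0 := by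
  by_contra! hne
  have hg0 (x : ℝ) (hx : x ∈ Icc x₁ x₂) : g x ≠ 0 := by
    intro hgx
    have hfx : f x ≠ 0 := fun hfx => hwronskian x hx (by rw [hfx, hgx]; ring)
    rcases hx.1.eq_or_lt with rfl | h₁
    · exact hfx hf₁
    rcases hx.2.eq_or_lt with rfl | h₂
    · exact hfx hf₂
    exact hne x ⟨h₁, h₂⟩ hgx
  have hquot (x : ℝ) (hx : x ∈ Icc x₁ x₂) := (hf x hx).fun_div (hg x hx) (hg0 x hx)
  obtain ⟨c, hc, hderiv⟩ := exists_hasDerivAt_eq_zero h12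
    (fun x hx => (hquot x hx).continuousAt.continuousWithinAt)
    (by rw [hf₁, hf₂, zero_div, zero_div]) fun x hx => hquot x (Ioo_subset_Icc_self hx)
  have hc' := Ioo_subset_Icc_self hc
  exact div_ne_zero (hwronskian c hc') (pow_ne_zero 2 (hg0 c hc')) hderiv

theorem exists_combination_eq_zero {K : Type*} [Field K] {p q r s : K} (h : p * s - r * q = 0) :
    ∃ α β : K, (α ≠ 0 ∨ β ≠ 0) ∧ α * p + β * q = 0 ∧ α * r + β * s = 0 := by
  obtain ⟨v, hv, hMv⟩ := Matrix.exists_mulVec_eq_zero_iff.mpr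
    (show !![p, q; r, s].det = 0 by rw [Matrix.det_fin_two_of, ← h, mul_comm q])
  refine ⟨v 0, v 1, ?_, ?_, ?_⟩
  · by_contra! h0
    exact hv (funext (Fin.forall_fin_two.mpr h0))
  · simpa [Matrix.mulVec, dotProduct, mul_comm] using congrFun hMv 0
  · simpa [Matrix.mulVec, dotProduct, mul_comm] using congrFun hMv 1

section

variable {F G : ℂ → ℂ} {D : Set ℂ} {a b : ℝ}

/-- A vanishing Wronskian would give a nontrivial combination with a double zero. -/
theorem wronskian_ne_zero_of_not_hasSurplus (hD : IsOpen D) (hF : RealHolomorphicOn F D)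
    (hG : RealHolomorphicOn G D)
    (hcomb : ∀ α β : ℝ, α ≠ 0 ∨ β ≠ 0 → ¬HasSurplus (fun z => α * F z + β * G z) D a b 2) {x : ℝ}
    (hx : (x : ℂ) ∈ D) :
    (deriv F x).re * (G x).re - (F x).re * (deriv G x).re ≠ 0 := by
  intro hzero
  obtain ⟨α, β, hαβ, hderiv, hval⟩ := exists_combination_eq_zero hzero
  have hF' := hF.differentiableOn
  have hG' := hG.differentiableOn
  refine hcomb α β hαβ (hasSurplus_of_deriv_eq_zero hD
    ((hF'.const_mul _).fun_add (hG'.const_mul _)) hx ?_ ?_)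
  · rw [← hF.ofReal_re hx, ← hG.ofReal_re hx]
    exact_mod_cast hval
  · have hnhds := hD.mem_nhds hx
    rw [(((hF'.differentiableAt hnhds).hasDerivAt.const_mul (α : ℂ)).fun_add
      ((hG'.differentiableAt hnhds).hasDerivAt.const_mul (β : ℂ))).deriv,
      ← (hF.deriv hD).ofReal_re hx, ← (hG.deriv hD).ofReal_re hx]
    exact_mod_cast hderiv

theorem interlaceOn_of_wronskian_ne_zero (hD : IsOpen D) (hF : RealHolomorphicOn F D)
    (hG : RealHolomorphicOn G D) (hab : ∀ x ∈ Icc a b, (x : ℂ) ∈ D)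
    (hzeros : ∀ z ∈ D, F z = 0 → z.re ∈ Icc a b)
    (hwronskian : ∀ x ∈ Icc a b, (deriv F x).re * (G x).re - (F x).re * (deriv G x).re ≠ 0) :
    InterlaceOn F G D := by
  intro x₁ x₂ h12 hx₁ hx₂ hF₁ hF₂ _
  have hsub : Icc x₁ x₂ ⊆ Icc a b :=
    Icc_subset_Icc (hzeros _ hx₁ hF₁).1 (hzeros _ hx₂ hF₂).2
  have hmem (x : ℝ) (hx : x ∈ Icc x₁ x₂) : (x : ℂ) ∈ D := hab x (hsub hx)
  obtain ⟨y, hy, hGy⟩ := exists_zero_between_of_wronskian_ne_zero h12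
    (fun x hx => hF.hasDerivAt_re hD (hmem x hx)) (fun x hx => hG.hasDerivAt_re hD (hmem x hx))
    (fun x hx => hwronskian x (hsub hx)) (by rw [hF₁, Complex.zero_re])
    (by rw [hF₂, Complex.zero_re])
  refine ⟨y, hy.1, hy.2, ?_⟩
  rw [← hG.ofReal_re (hmem y (Ioo_subset_Icc_self hy)), hGy, Complex.ofReal_zero]

/-- The zeros of `F` and `G` in `D` are real, simple, contained in `(a, b)`, and interlace. -/
def InterlacingZeros (F G : ℂ → ℂ) (D : Set ℂ) (a b : ℝ) : Prop :=
  (∀ z ∈ D, (F z = 0 → z.im = 0 ∧ z.re ∈ Ioo a b ∧ deriv F z ≠ 0) ∧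
    (G z = 0 → z.im = 0 ∧ z.re ∈ Ioo a b ∧ deriv G z ≠ 0)) ∧
  InterlaceOn F G D ∧ InterlaceOn G F D

theorem IsLevel.interlacingZeros_of_not_hasSurplus {μ : Measure ℝ} (h : IsLevel μ a b D)
    (hF : RealHolomorphicOn F D) (hG : RealHolomorphicOn G D) (hF1 : ¬HasSurplus F D a b 1)
    (hG1 : ¬HasSurplus G D a b 1)
    (hcomb : ∀ α β : ℝ, α ≠ 0 ∨ β ≠ 0 → ¬HasSurplus (fun z => α * F z + β * G z) D a b 2) :
    InterlacingZeros F G D a b := by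
  have hFzeros {z : ℂ} := simple_zero_of_not_hasSurplus (z := z) h.isOpen h.conj_mem hF hF1
  have hGzeros {z : ℂ} := simple_zero_of_not_hasSurplus (z := z) h.isOpen h.conj_mem hG hG1
  have hwronskian (x : ℝ) (hx : x ∈ Icc a b) :=
    wronskian_ne_zero_of_not_hasSurplus h.isOpen hF hG hcomb (h.ofReal_mem x hx)
  refine ⟨fun z hz => ⟨hFzeros hz, hGzeros hz⟩, ?_, ?_⟩
  · exact interlaceOn_of_wronskian_ne_zero h.isOpen hF hG h.ofReal_mem
      (fun z hz hFz => Ioo_subset_Icc_self (hFzeros hz hFz).2.1) hwronskian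
  · refine interlaceOn_of_wronskian_ne_zero h.isOpen hG hF h.ofReal_mem
      (fun z hz hGz => Ioo_subset_Icc_self (hGzeros hz hGz).2.1) fun x hx => ?_
    rw [← neg_ne_zero, neg_sub, mul_comm, mul_comm (deriv G x).re]
    exact hwronskian x hx

end

/-! ## Linear combinations of neighbouring forms -/

theorem msum_bump {m l : ℕ} (hl : l ≤ m) (n : ℕ → ℕ) : msum m (bump l n) = msum m n + 1 := by
  have hbump (j : ℕ) : bump l n j = n j + if j = l then 1 else 0 := by
    unfold bump
    split_ifs <;> rfl
  simp only [msum, hbump, Finset.sum_add_distrib, Finset.sum_ite_eq', Finset.mem_range,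
    if_pos (show l < m + 1 by lia)]

theorem le_bump (l : ℕ) (n : ℕ → ℕ) : n ≤ bump l n := fun j => by
  unfold bump
  split_ifs <;> lia

theorem tailSum_mono (m j : ℕ) : Monotone fun n => tailSum m n j := fun _ _ h =>
  Finset.sum_le_sum fun k _ => h k

namespace MixedOrth

variable {m₁ m₂ : ℕ} {S1 : NikSys m₁} {S2 : NikSys m₂} {n1 n2 n1' n2' : ℕ → ℕ} {A A' : ℕ → ℝ[X]}

theorem mono (h : MixedOrth S1 S2 n1 n2 A) (hn1' : Decr m₁ n1') (hn2' : Decr m₂ n2')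
    (h1 : n1 ≤ n1') (h2 : n2' ≤ n2) : MixedOrth S1 S2 n1' n2' A where
  measure_zero_eq := h.measure_zero_eq
  decr_left := hn1'
  decr_right := hn2'
  degree_lt j hj := (h.degree_lt j hj).trans_le (by exact_mod_cast h1 j)
  sInt_eq_zero k hk ν hν := h.sInt_eq_zero k hk ν (hν.trans_le (h2 k))

theorem smul_add_smul (h : MixedOrth S1 S2 n1 n2 A) (h' : MixedOrth S1 S2 n1 n2 A') (α β : ℝ) :
    MixedOrth S1 S2 n1 n2 (α • A + β • A') where
  measure_zero_eq := h.measure_zero_eq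
  decr_left := h.decr_left
  decr_right := h.decr_right
  degree_lt j hj := by
    rw [← mem_degreeLT]
    exact add_mem (Submodule.smul_mem _ _ (mem_degreeLT.mpr (h.degree_lt j hj)))
      (Submodule.smul_mem _ _ (mem_degreeLT.mpr (h'.degree_lt j hj)))
  sInt_eq_zero k hk ν hν := by
    have hlevel := h.isLevel (Nat.zero_le m₂)
    have hint (B : ℕ → ℝ[X]) : Integrable
        (fun x : ℝ => (x : ℂ) ^ ν * posForm S1 B 0 x * wt S2.μ S2.e 0 k x) (S2.μ 0) :=
      hlevel.isCarriedBy.integrable ((ContinuousOn.mul (by fun_prop)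
        (continuousOn_negForm h.measure_zero_eq B (Nat.zero_le _))).mul
        ((S2.realHolomorphicOn_wt hk).continuousOn_ofReal (S2.isLevel (Nat.zero_le _)).ofReal_mem))
    have hcomb (x : ℝ) : (x : ℂ) ^ ν * posForm S1 (α • A + β • A') 0 x * wt S2.μ S2.e 0 k x =
        α * ((x : ℂ) ^ ν * posForm S1 A 0 x * wt S2.μ S2.e 0 k x) +
          β * ((x : ℂ) ^ ν * posForm S1 A' 0 x * wt S2.μ S2.e 0 k x) := by
      rw [posForm_smul_add_smul]
      ring
    have h0 := h.sInt_eq_zero k hk ν hν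
    have h0' := h'.sInt_eq_zero k hk ν hν
    simp only [sInt] at h0 h0' ⊢
    simp only [hcomb]
    rw [integral_add ((hint A).const_mul _) ((hint A').const_mul _), integral_const_mul,
      integral_const_mul]
    linear_combination (α : ℂ) * h0 + β * h0'

theorem eq_zero_of_msum_le (h : MixedOrth S1 S2 n1 n2 A) (hsum : msum m₁ n1 ≤ msum m₂ n2) :
    ∀ k ≤ m₁, A k = 0 :=
  h.eq_zero_of_hasSurplus_negForm hsum (Nat.zero_le _)
    (hasSurplus_zero (h.realHolomorphicOn (Nat.zero_le _)).differentiableOn)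

end MixedOrth

theorem IsMOP.mixedOrth {m₁ m₂ : ℕ} {S1 : NikSys m₁} {S2 : NikSys m₂} {n1 n2 : ℕ → ℕ}
    {A : ℕ → ℝ[X]} (h : IsMOP m₁ m₂ S1 S2 n1 n2 A) (hb : S1.μ 0 = S2.μ 0) (h1 : Decr m₁ n1)
    (h2 : Decr m₂ n2) : MixedOrth S1 S2 n1 n2 A :=
  ⟨hb, h1, h2, h.1, h.2.2⟩

theorem IsMOP.not_forall_eq_zero {m₁ m₂ : ℕ} {S1 : NikSys m₁} {S2 : NikSys m₂} {n1 n2 : ℕ → ℕ}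
    {A : ℕ → ℝ[X]} (h : IsMOP m₁ m₂ S1 S2 n1 n2 A) : ¬∀ k ≤ m₁, A k = 0 := by
  obtain ⟨j, hj, hne⟩ := h.2.1
  exact fun h0 => hne (h0 j hj)

section

variable {m₁ m₂ : ℕ} {S1 : NikSys m₁} {S2 : NikSys m₂} {n1 n2 : ℕ → ℕ} {l₁ l₂ : ℕ}
  {A A' : ℕ → ℝ[X]}

theorem not_forall_smul_add_smul_eq_zero (hb : S1.μ 0 = S2.μ 0) (hl₂ : l₂ ≤ m₂) (h1 : Decr m₁ n1)
    (h2l : Decr m₂ (bump l₂ n2)) (hsum : msum m₂ n2 + 1 = msum m₁ n1)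
    (hA : IsMOP m₁ m₂ S1 S2 n1 n2 A) (hA' : IsMOP m₁ m₂ S1 S2 (bump l₁ n1) (bump l₂ n2) A')
    {α β : ℝ} (hαβ : α ≠ 0 ∨ β ≠ 0) : ¬∀ k ≤ m₁, (α • A + β • A') k = 0 := by
  intro h0
  simp only [Pi.add_apply, Pi.smul_apply] at h0
  rcases eq_or_ne β 0 with rfl | hβ
  · refine hA.not_forall_eq_zero fun k hk => ?_
    have hk0 := h0 k hk
    rw [zero_smul, add_zero] at hk0
    exact (smul_eq_zero.mp hk0).resolve_left (hαβ.resolve_right (not_not.mpr rfl))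
  · refine hA'.not_forall_eq_zero (MixedOrth.eq_zero_of_msum_le (S2 := S2) (n1 := n1)
      (n2 := bump l₂ n2) ⟨hb, h1, h2l, fun k hk => ?_, hA'.2.2⟩ (by rw [msum_bump hl₂, hsum]))
    have hk0 := h0 k hk
    rw [add_comm, add_eq_zero_iff_eq_neg, ← neg_smul] at hk0
    rw [← degree_smul_of_smul_regular (A' k) (IsSMulRegular.of_ne_zero hβ), hk0]
    exact (degree_smul_le _ _).trans_lt (hA.1 k hk)

theorem IsMOP.mixedOrth_smul_add_smul (hb : S1.μ 0 = S2.μ 0) (h1 : Decr m₁ n1) (h2 : Decr m₂ n2)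
    (h1l : Decr m₁ (bump l₁ n1)) (h2l : Decr m₂ (bump l₂ n2))
    (hA : IsMOP m₁ m₂ S1 S2 n1 n2 A) (hA' : IsMOP m₁ m₂ S1 S2 (bump l₁ n1) (bump l₂ n2) A')
    (α β : ℝ) : MixedOrth S1 S2 (bump l₁ n1) n2 (α • A + β • A') :=
  ((hA.mixedOrth hb h1 h2).mono h1l h2 (le_bump l₁ n1) le_rfl).smul_add_smul
    ((hA'.mixedOrth hb h1l h2l).mono h1l h2 le_rfl (le_bump l₂ n2)) α β

end

theorem interlacing_of_zeros_general (m₁ m₂ : ℕ) (S1 : NikSys m₁) (S2 : NikSys m₂)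
    (hb : S1.μ 0 = S2.μ 0) (n1 n2 : ℕ → ℕ) (l₁ l₂ : ℕ) (hl₁ : l₁ ≤ m₁) (hl₂ : l₂ ≤ m₂)
    (h1 : Decr m₁ n1) (h2 : Decr m₂ n2) (h1l : Decr m₁ (bump l₁ n1)) (h2l : Decr m₂ (bump l₂ n2))
    (hsum : msum m₂ n2 + 1 = msum m₁ n1) (A A' : ℕ → ℝ[X])
    (hA : IsMOP m₁ m₂ S1 S2 n1 n2 A) (hA' : IsMOP m₁ m₂ S1 S2 (bump l₁ n1) (bump l₂ n2) A') :
    (∀ j ≤ m₁, 2 ≤ tailSum m₁ n1 j →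
      InterlacingZeros (posForm S1 A j) (posForm S1 A' j) (S1.dom j) (S1.a j) (S1.b j)) ∧
    ∀ i < m₂, InterlacingZeros (negForm S1 S2 A (i + 1)) (negForm S1 S2 A' (i + 1))
      (cpx (Icc (S2.a i) (S2.b i)))ᶜ (S2.a (i + 1)) (S2.b (i + 1)) := by
  have hmo := hA.mixedOrth hb h1 h2
  have hmo' := hA'.mixedOrth hb h1l h2l
  have hmo_comb := hA.mixedOrth_smul_add_smul hb h1 h2 h1l h2l hA'
  have hsum' : msum m₁ (bump l₁ n1) = msum m₂ (bump l₂ n2) + 1 := by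
    rw [msum_bump hl₁, msum_bump hl₂, hsum]
  have hsum_comb : msum m₁ (bump l₁ n1) = msum m₂ n2 + 2 := by rw [msum_bump hl₁, ← hsum]
  have hne {α β : ℝ} := not_forall_smul_add_smul_eq_zero (α := α) (β := β) hb hl₂ h1 h2l hsum hA hA'
  refine ⟨fun j hj htail => ?_, fun i hi => ?_⟩
  · have htail' : tailSum m₁ n1 j ≤ tailSum m₁ (bump l₁ n1) j := tailSum_mono _ _ (le_bump l₁ n1)
    refine (S1.isLevel hj).interlacingZeros_of_not_hasSurplus (realHolomorphicOn_posForm S1 A j)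
      (realHolomorphicOn_posForm S1 A' j)
      (fun h => hA.not_forall_eq_zero
        (hmo.eq_zero_of_hasSurplus_posForm hsum.ge hj (by lia) h))
      (fun h => hA'.not_forall_eq_zero
        (hmo'.eq_zero_of_hasSurplus_posForm hsum'.le hj (by lia) h))
      fun α β hαβ h => hne hαβ
        ((hmo_comb α β).eq_zero_of_hasSurplus_posForm hsum_comb.le hj (by lia) ?_)
    simpa only [← posForm_smul_add_smul] using h
  · have hi' : i + 1 ≤ m₂ := hi
    refine (hmo.isLevel hi').interlacingZeros_of_not_hasSurplus (hmo.realHolomorphicOn hi')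
      (hmo'.realHolomorphicOn hi')
      (fun h => hA.not_forall_eq_zero (hmo.eq_zero_of_hasSurplus_negForm hsum.ge hi' h))
      (fun h => hA'.not_forall_eq_zero (hmo'.eq_zero_of_hasSurplus_negForm hsum'.le hi' h))
      fun α β hαβ h => hne hαβ
        ((hmo_comb α β).eq_zero_of_hasSurplus_negForm hsum_comb.le hi' (h.congr fun z hz => ?_))
    exact (negForm_smul_add_smul hb α β hi' hz).symm

/-- **Interlacing.** If `n_{1,m₁} ≥ 2` then for every
`j ∈ {-m₂,…,m₁}` the zeros of `𝒜_{n,j}` and `𝒜_{n^l,j}` (in the appropriate region)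
are real and simple, lie in the interior of the corresponding interval, and
interlace. -/
theorem interlacing_of_zeros
    (m₁ m₂ : ℕ) (S1 : NikSys m₁) (S2 : NikSys m₂)
    (hbase : S1.μ 0 = S2.μ 0 ∧ S1.e 0 = S2.e 0)
    (n1 n2 : ℕ → ℕ) (l₁ l₂ : ℕ) (hl₁ : l₁ ≤ m₁) (hl₂ : l₂ ≤ m₂)
    (h1 : Decr m₁ n1) (h2 : Decr m₂ n2)
    (h1l : Decr m₁ (bump l₁ n1)) (h2l : Decr m₂ (bump l₂ n2))
    (hsum : msum m₂ n2 + 1 = msum m₁ n1) (hlast : 2 ≤ n1 m₁)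
    (A A' : ℕ → Polynomial ℝ)
    (hA : IsMOP m₁ m₂ S1 S2 n1 n2 A) (hAm : MonicLast m₁ A)
    (hA' : IsMOP m₁ m₂ S1 S2 (bump l₁ n1) (bump l₂ n2) A') (hA'm : MonicLast m₁ A') :
    -- indices `j = 0,…,m₁` (zeros taken in `ℂ ∖ Δ¹_{j+1}`):
    (∀ j ≤ m₁,
      (∀ z ∈ (if j < m₁ then (cpx (Set.Icc (S1.a (j+1)) (S1.b (j+1))))ᶜ
          else (Set.univ : Set ℂ)),
        (linForm S1.μ S1.e m₁ j A z = 0 →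
          z.im = 0 ∧ z.re ∈ Set.Ioo (S1.a j) (S1.b j) ∧
            deriv (linForm S1.μ S1.e m₁ j A) z ≠ 0) ∧
        (linForm S1.μ S1.e m₁ j A' z = 0 →
          z.im = 0 ∧ z.re ∈ Set.Ioo (S1.a j) (S1.b j) ∧
            deriv (linForm S1.μ S1.e m₁ j A') z ≠ 0)) ∧
      InterlaceOn (linForm S1.μ S1.e m₁ j A) (linForm S1.μ S1.e m₁ j A')
        (if j < m₁ then (cpx (Set.Icc (S1.a (j+1)) (S1.b (j+1))))ᶜ
          else (Set.univ : Set ℂ)) ∧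
      InterlaceOn (linForm S1.μ S1.e m₁ j A') (linForm S1.μ S1.e m₁ j A)
        (if j < m₁ then (cpx (Set.Icc (S1.a (j+1)) (S1.b (j+1))))ᶜ
          else (Set.univ : Set ℂ))) ∧
    -- indices `j = -1,…,-m₂` (zeros of `𝒜_{n,-j}` taken in `ℂ ∖ Δ²_{j-1}`):
    (∀ j, 1 ≤ j → j ≤ m₂ →
      (∀ z ∈ (cpx (Set.Icc (S2.a (j-1)) (S2.b (j-1))))ᶜ,
        (linFormNeg S2.μ S2.e (linForm S1.μ S1.e m₁ 0 A) j z = 0 →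
          z.im = 0 ∧ z.re ∈ Set.Ioo (S2.a j) (S2.b j) ∧
            deriv (linFormNeg S2.μ S2.e (linForm S1.μ S1.e m₁ 0 A) j) z ≠ 0) ∧
        (linFormNeg S2.μ S2.e (linForm S1.μ S1.e m₁ 0 A') j z = 0 →
          z.im = 0 ∧ z.re ∈ Set.Ioo (S2.a j) (S2.b j) ∧
            deriv (linFormNeg S2.μ S2.e (linForm S1.μ S1.e m₁ 0 A') j) z ≠ 0)) ∧
      InterlaceOn (linFormNeg S2.μ S2.e (linForm S1.μ S1.e m₁ 0 A) j)
        (linFormNeg S2.μ S2.e (linForm S1.μ S1.e m₁ 0 A') j)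
        ((cpx (Set.Icc (S2.a (j-1)) (S2.b (j-1))))ᶜ) ∧
      InterlaceOn (linFormNeg S2.μ S2.e (linForm S1.μ S1.e m₁ 0 A') j)
        (linFormNeg S2.μ S2.e (linForm S1.μ S1.e m₁ 0 A) j)
        ((cpx (Set.Icc (S2.a (j-1)) (S2.b (j-1))))ᶜ)) := by
  obtain ⟨hpos, hneg⟩ := interlacing_of_zeros_general m₁ m₂ S1 S2 hbase.1 n1 n2 l₁ l₂ hl₁ hl₂ h1 h2
    h1l h2l hsum A A' hA hA'
  refine ⟨fun j hj => hpos j hj (hlast.trans ?_), fun j hj1 hj => ?_⟩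
  · exact Finset.single_le_sum (fun _ _ => Nat.zero_le _) (Finset.right_mem_Icc.mpr hj)
  · obtain ⟨i, rfl⟩ := Nat.exists_eq_add_of_le' hj1
    exact hneg i hj

end
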